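/- arXiv:1101.5224 — 4 statements merged into one kernel-verified Lean document; each statement's English description precedes it below -/
import Mathlib

section
/- Let n ≥ 2, m ≥ 1, R > 0, and let B_R(0) be the open ball of radius R centered at the origin in ℝⁿ. Let u be smooth on the closure of B_R(0) with ∫_{B_R(0)} u dx = 0 and ∂(Δ^j u)/∂n = 0 on ∂B_R(0) for all j = 0, 1, …, m−1. Then ∫_{B_R(0)} |Δ^m u|² dx ≥ μ₁(B_R(0))^{2m} · ∫_{B_R(0)} |u|² dx, and equality holds if and only if u satisfies Δu = −μ₁(B_R(0))·u in B_R(0). -/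
open MeasureTheory Set Metric

noncomputable section

/-- The Laplacian of `f` (sum of second partial derivatives), with all derivatives
taken within the set `S`. -/
def lapWithin {n : ℕ} (S : Set (EuclideanSpace ℝ (Fin n)))
    (f : EuclideanSpace ℝ (Fin n) → ℝ) (x : EuclideanSpace ℝ (Fin n)) : ℝ :=
  ∑ i : Fin n, fderivWithin ℝ
    (fun y => fderivWithin ℝ f S y (EuclideanSpace.single i 1)) S x (EuclideanSpace.single i 1)

/-- `μ` is a Neumann eigenvalue of the Laplacian on the ball `B_R(0) ⊂ ℝⁿ`: there is a nonzero
function `u`, smooth on the closed ball, with `Δu = −μ·u` in the open ball and vanishing outward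
normal (i.e. radial) derivative on the boundary sphere. -/
def IsLapNeumannEigenvalueBall (n : ℕ) (R μ : ℝ) : Prop :=
  ∃ u : EuclideanSpace ℝ (Fin n) → ℝ,
    ContDiffOn ℝ (⊤ : ℕ∞) u (closedBall 0 R) ∧
    (∃ x ∈ closedBall (0 : EuclideanSpace ℝ (Fin n)) R, u x ≠ 0) ∧
    (∀ x ∈ ball (0 : EuclideanSpace ℝ (Fin n)) R,
      lapWithin (closedBall 0 R) u x = -μ * u x) ∧
    (∀ x : EuclideanSpace ℝ (Fin n), ‖x‖ = R →
      fderivWithin ℝ u (closedBall 0 R) x (‖x‖⁻¹ • x) = 0)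

/-- `Υ` is a Neumann eigenvalue of the bi-harmonic operator `Δ²` on the ball `B_R(0) ⊂ ℝⁿ`:
there is a nonzero function `u`, smooth on the closed ball, with `Δ²u = Υ·u` in the open ball and
`∂u/∂n = ∂(Δu)/∂n = 0` on the boundary sphere. -/
def IsBiLapNeumannEigenvalueBall (n : ℕ) (R Υ : ℝ) : Prop :=
  ∃ u : EuclideanSpace ℝ (Fin n) → ℝ,
    ContDiffOn ℝ (⊤ : ℕ∞) u (closedBall 0 R) ∧
    (∃ x ∈ closedBall (0 : EuclideanSpace ℝ (Fin n)) R, u x ≠ 0) ∧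
    (∀ x ∈ ball (0 : EuclideanSpace ℝ (Fin n)) R,
      lapWithin (closedBall 0 R) (lapWithin (closedBall 0 R) u) x = Υ * u x) ∧
    (∀ x : EuclideanSpace ℝ (Fin n), ‖x‖ = R →
      fderivWithin ℝ u (closedBall 0 R) x (‖x‖⁻¹ • x) = 0) ∧
    (∀ x : EuclideanSpace ℝ (Fin n), ‖x‖ = R →
      fderivWithin ℝ (lapWithin (closedBall 0 R) u) (closedBall 0 R) x (‖x‖⁻¹ • x) = 0)

/-- `Υ` is a Neumann eigenvalue of the even-multi-Laplacian `Δ^(2m)` on the ball `B_R(0) ⊂ ℝⁿ`: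
there is a nonzero function `u`, smooth on the closed ball, with `Δ^(2m)u = Υ·u` in the open ball
and `∂(Δʲu)/∂n = 0` on the boundary sphere for every `j = 0, 1, …, 2m−1`. -/
def IsPolyLapNeumannEigenvalueBall (n m : ℕ) (R Υ : ℝ) : Prop :=
  ∃ u : EuclideanSpace ℝ (Fin n) → ℝ,
    ContDiffOn ℝ (⊤ : ℕ∞) u (closedBall 0 R) ∧
    (∃ x ∈ closedBall (0 : EuclideanSpace ℝ (Fin n)) R, u x ≠ 0) ∧
    (∀ x ∈ ball (0 : EuclideanSpace ℝ (Fin n)) R,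
      (lapWithin (closedBall 0 R))^[2 * m] u x = Υ * u x) ∧
    (∀ j < 2 * m, ∀ x : EuclideanSpace ℝ (Fin n), ‖x‖ = R →
      fderivWithin ℝ ((lapWithin (closedBall 0 R))^[j] u) (closedBall 0 R) x (‖x‖⁻¹ • x) = 0)


open Filter Topology


/-- Short name for Euclidean space. -/
abbrev EE (n : ℕ) := EuclideanSpace ℝ (Fin n)

/-- Standard basis vector. -/
abbrev eb {n : ℕ} (i : Fin n) : EE n := EuclideanSpace.single i (1 : ℝ)

/-- Divergence of a vector field. -/
def dvg {n : ℕ} (W : EE n → EE n) (x : EE n) : ℝ := ∑ i, (fderiv ℝ W x (eb i)) i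

lemma cutoff_deriv_bound : ∃ M : ℝ, 0 ≤ M ∧ ∀ t : ℝ,
    0 ≤ deriv Real.smoothTransition t ∧ deriv Real.smoothTransition t ≤ M ∧
    (t < 0 → deriv Real.smoothTransition t = 0) ∧ (1 < t → deriv Real.smoothTransition t = 0) := by
  have hc : Continuous (deriv Real.smoothTransition) :=
    (Real.smoothTransition.contDiff (n := 1)).continuous_deriv le_rfl
  obtain ⟨M, hM⟩ := (isCompact_Icc (a := (0:ℝ)) (b := 1)).exists_bound_of_continuousOn hc.continuousOn
  have h0 : ∀ t : ℝ, t < 0 → deriv Real.smoothTransition t = 0 := by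
    intro t ht
    have : Real.smoothTransition =ᶠ[𝓝 t] fun _ => 0 := by
      filter_upwards [gt_mem_nhds ht] with s hs
      exact Real.smoothTransition.zero_of_nonpos hs.le
    rw [this.deriv_eq]; simp
  have h1 : ∀ t : ℝ, 1 < t → deriv Real.smoothTransition t = 0 := by
    intro t ht
    have : Real.smoothTransition =ᶠ[𝓝 t] fun _ => 1 := by
      filter_upwards [lt_mem_nhds ht] with s hs
      exact Real.smoothTransition.one_of_one_le hs.le
    rw [this.deriv_eq]; simp
  have hM0 : 0 ≤ M := (norm_nonneg _).trans (hM 0 (by simp))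
  refine ⟨M, hM0, fun t => ⟨?_, ?_, h0 t, h1 t⟩⟩
  · exact Real.smoothTransition.monotone.deriv_nonneg
  · by_cases h : t < 0
    · rw [h0 t h]; exact hM0
    · by_cases h' : 1 < t
      · rw [h1 t h']; exact hM0
      · exact (le_abs_self _).trans (hM t ⟨not_lt.1 h, not_lt.1 h'⟩)

lemma integral_dvg_zero {n : ℕ} (W : EE n → EE n) (hW : ContDiff ℝ 1 W)
    (hs : HasCompactSupport W) : Integrable (dvg W) ∧ ∫ x, dvg W x = 0 := by
  have hcomp : ∀ i : Fin n, Integrable (fun x => (fderiv ℝ W x (eb i)) i) ∧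
      ∫ x, (fderiv ℝ W x (eb i)) i = 0 := by
    intro i
    have hWi : ContDiff ℝ 1 (fun x => W x i) := by fun_prop
    have hsi : HasCompactSupport (fun x => W x i) :=
      hs.comp_left (g := fun y : EE n => y i) (by simp)
    have hfd : ∀ x, fderiv ℝ (fun x => W x i) x (eb i) = (fderiv ℝ W x (eb i)) i := by
      intro x
      have h1 : HasFDerivAt W (fderiv ℝ W x) x := (hW.differentiable (by norm_num) x).hasFDerivAt
      have h2 := (EuclideanSpace.proj (𝕜 := ℝ) i : EE n →L[ℝ] ℝ).hasFDerivAt.comp x h1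
      have h3 : HasFDerivAt (fun x => W x i)
        ((EuclideanSpace.proj (𝕜 := ℝ) i : EE n →L[ℝ] ℝ).comp (fderiv ℝ W x)) x := h2
      rw [h3.fderiv]; rfl
    have hcont : Continuous (fun x => fderiv ℝ (fun x => W x i) x (eb i)) :=
      (hWi.continuous_fderiv (by norm_num)).clm_apply continuous_const
    have hIntg : Integrable (fun x => fderiv ℝ (fun x => W x i) x (eb i)) :=
      hcont.integrable_of_hasCompactSupport (hsi.fderiv_apply (𝕜 := ℝ) _)
    have hIntg0 : Integrable (fun x => W x i) :=
      hWi.continuous.integrable_of_hasCompactSupport hsi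
    have key := integral_mul_fderiv_eq_neg_fderiv_mul_of_integrable (μ := (volume : Measure (EE n)))
      (f := fun _ => (1:ℝ)) (g := fun x => W x i) (v := eb i) (by simp) (by simpa using hIntg)
      (by simpa using hIntg0) (fun x _ => by fun_prop)
      (fun x _ => hWi.differentiable (by norm_num) x)
    simp at key
    simp_rw [← hfd]
    exact ⟨hIntg, key⟩
  unfold dvg
  refine ⟨integrable_finsetSum _ fun i _ => (hcomp i).1, ?_⟩
  rw [integral_finsetSum _ fun i _ => (hcomp i).1]
  exact Finset.sum_eq_zero fun i _ => (hcomp i).2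

lemma dvg_smul {n : ℕ} (f : EE n → ℝ) (W : EE n → EE n) (x : EE n) {f' : EE n}
    (hf : HasGradientAt f f' x) (hW : DifferentiableAt ℝ W x) :
    dvg (fun y => f y • W y) x = f x * dvg W x + inner ℝ f' (W x) := by
  unfold dvg
  have := (hf.hasFDerivAt.smul hW.hasFDerivAt).fderiv
  have h2 : fderiv ℝ (fun y => f y • W y) x = _ := this
  rw [h2]
  simp only [add_apply, smul_apply,
    ContinuousLinearMap.smulRight_apply, PiLp.add_apply, PiLp.smul_apply, smul_eq_mul,
    Finset.sum_add_distrib, Finset.mul_sum, InnerProductSpace.toDual_apply_apply]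
  congr 1
  rw [PiLp.inner_apply]
  refine Finset.sum_congr rfl fun i _ => ?_
  simp [EuclideanSpace.inner_single_right, mul_comm]

/-- One-sided divergence theorem on the superlevel set `{d > 0}`. -/
lemma div_lemma {n : ℕ} (d : EE n → ℝ) (hd : ContDiff ℝ 1 d)
    (hbd : Bornology.IsBounded {x | 0 < d x}) (W : EE n → EE n)
    (hW : ContDiffOn ℝ 1 W {x | 0 < d x}) (h : EE n → ℝ)
    (hIntg : IntegrableOn h {x | 0 < d x}) (hdiv : ∀ x, 0 < d x → dvg W x ≤ h x)
    (C : ℝ) (hC : 0 ≤ C) (hnormal : ∀ x, 0 < d x → inner ℝ (gradient d x) (W x) ≤ C * d x) :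
    0 ≤ ∫ x in {x | 0 < d x}, h x := by
  obtain ⟨M, hM0, hM⟩ := cutoff_deriv_bound
  set U : Set (EE n) := {x | 0 < d x} with hU
  have hUo : IsOpen U := isOpen_lt continuous_const hd.continuous
  have hUfin : volume U < ⊤ := hbd.measure_lt_top
  let η := Real.smoothTransition
  have hη : ContDiff ℝ 1 η := Real.smoothTransition.contDiff (n := 1)
  let χ : ℕ → EE n → ℝ := fun k x => η (k * d x - 1)
  have hχc : ∀ k, ContDiff ℝ 1 (χ k) := fun k => hη.comp (by fun_prop)
  let E : ℕ → EE n → ℝ := fun k x => k * deriv η (k * d x - 1) * (C * d x)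
  have hχ0 : ∀ (k : ℕ) x, (k:ℝ) * d x ≤ 1 → χ k x = 0 := fun k x hx =>
    Real.smoothTransition.zero_of_nonpos (by linarith)
  -- main inequality
  have hηc : Continuous (deriv η) := hη.continuous_deriv le_rfl
  have hmain : ∀ k : ℕ, 0 ≤ ∫ x in U, (χ k x * h x + E k x) := by
    intro k
    have hsub : ∀ x, χ k x ≠ 0 → x ∈ {x | 1 ≤ k * d x} := by
      intro x hx
      by_contra hcon
      exact hx (hχ0 k x (not_le.1 hcon).le)
    have hclosed : IsClosed {x | 1 ≤ k * d x} :=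
      isClosed_le continuous_const (continuous_const.mul hd.continuous)
    have hpos : ∀ x, 1 ≤ k * d x → 0 < d x := by
      intro x hx
      by_contra hcon
      have : (k:ℝ) * d x ≤ 0 := mul_nonpos_of_nonneg_of_nonpos (by positivity) (not_lt.1 hcon)
      linarith
    have hcomp : IsCompact {x | 1 ≤ k * d x} :=
      Metric.isCompact_of_isClosed_isBounded hclosed (hbd.subset hpos)
    have hsupp : Function.support (fun x => χ k x • W x) ⊆ {x | 1 ≤ k * d x} := by
      intro x hx
      apply hsub
      intro h0
      exact hx (by simp [h0])
    have hcs : HasCompactSupport (fun x => χ k x • W x) :=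
      HasCompactSupport.of_support_subset_isCompact hcomp hsupp
    have hcd : ContDiff ℝ 1 (fun x => χ k x • W x) := by
      rw [contDiff_iff_contDiffAt]
      intro x
      by_cases hx : 1 ≤ k * d x
      · exact (hχc k).contDiffAt.smul (hW.contDiffAt (hUo.mem_nhds (hpos x hx)))
      · have : (fun x => χ k x • W x) =ᶠ[𝓝 x] fun _ => 0 := by
          filter_upwards [hclosed.isOpen_compl.mem_nhds hx] with y hy
          have : χ k y = 0 := hχ0 k y (not_le.1 (show ¬ (1 ≤ k * d y) from hy)).le
          simp [this]
        exact contDiffAt_const.congr_of_eventuallyEq this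
    obtain ⟨hI, hz⟩ := integral_dvg_zero _ hcd hcs
    have hzero : ∀ x, x ∉ U → dvg (fun x => χ k x • W x) x = 0 := by
      intro x hx
      have hx' : x ∉ {x | 1 ≤ k * d x} := fun h => hx (hpos x h)
      have : (fun x => χ k x • W x) =ᶠ[𝓝 x] fun _ => 0 := by
        filter_upwards [hclosed.isOpen_compl.mem_nhds hx'] with y hy
        have : χ k y = 0 := hχ0 k y (not_le.1 (show ¬ (1 ≤ k * d y) from hy)).le
        simp [this]
      unfold dvg
      rw [this.fderiv_eq]
      simp
    rw [← setIntegral_eq_integral_of_forall_compl_eq_zero hzero] at hz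
    rw [← hz]
    apply setIntegral_mono_on hI.integrableOn _ hUo.measurableSet
    · intro x hx
      have hgd : HasGradientAt d (gradient d x) x :=
        (hd.differentiable (by norm_num) x).hasGradientAt
      have hgχ : HasGradientAt (χ k) ((k * deriv η (k * d x - 1)) • gradient d x) x := by
        rw [hasGradientAt_iff_hasFDerivAt]
        have h1 : HasFDerivAt (fun y => (k:ℝ) * d y - 1) ((k:ℝ) • fderiv ℝ d x) x := by
          have := (hd.differentiable (by norm_num) x).hasFDerivAt
          exact (this.const_mul (k:ℝ)).sub_const 1
        have h2 : HasDerivAt η (deriv η (k * d x - 1)) (k * d x - 1) :=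
          (hη.differentiable (by norm_num) _).hasDerivAt
        have h3 := h2.comp_hasFDerivAt x h1
        have e : (InnerProductSpace.toDual ℝ (EE n)) ((↑k * deriv η (↑k * d x - 1)) • gradient d x) =
            deriv η (↑k * d x - 1) • (k:ℝ) • fderiv ℝ d x := by
          rw [map_smul, toDual_gradient, smul_smul, mul_comm]
        rw [e]
        exact h3
      rw [dvg_smul _ _ _ hgχ ((hW.contDiffAt (hUo.mem_nhds hx)).differentiableAt (by norm_num))]
      have hχ1 : 0 ≤ χ k x := Real.smoothTransition.nonneg _
      rw [inner_smul_left]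
      have := mul_le_mul_of_nonneg_left (hdiv x hx) hχ1
      have h4 : 0 ≤ (k:ℝ) * deriv η (k * d x - 1) := mul_nonneg (by positivity) (hM _).1
      have := mul_le_mul_of_nonneg_left (hnormal x hx) h4
      simp only [E, conj_trivial]
      linarith
    · apply Integrable.add
      · refine Integrable.bdd_mul (c := 1) hIntg ((hχc k).continuous.aestronglyMeasurable) ?_
        filter_upwards with x
        rw [Real.norm_of_nonneg (Real.smoothTransition.nonneg _)]
        exact Real.smoothTransition.le_one _
      · have : Continuous (E k) := by
          have := hd.continuous
          simp only [E]; fun_prop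
        exact (this.continuousOn.integrableOn_compact hbd.isCompact_closure).mono_set subset_closure
  have hbound : ∀ k x, 0 < d x → 0 ≤ E k x ∧ E k x ≤ 2 * M * C := by
    intro k x hx
    obtain ⟨a1, a2, a3, a4⟩ := hM (k * d x - 1)
    have hk : (0:ℝ) ≤ k := by positivity
    refine ⟨by simp only [E]; exact mul_nonneg (mul_nonneg hk a1) (by positivity), ?_⟩
    simp only [E]
    by_cases h1 : 1 < k * d x - 1
    · have : deriv η (k * d x - 1) = 0 := a4 h1
      rw [this]; simp; positivity
    · have e : k * deriv η (k * d x - 1) * (C * d x) = (deriv η (k * d x - 1) * C) * (k * d x) := by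
        ring
      rw [e]
      have : deriv η (k * d x - 1) * C ≤ M * C := mul_le_mul_of_nonneg_right a2 hC
      have h2 : k * d x ≤ 2 := by linarith
      have h3 : 0 ≤ deriv η (k * d x - 1) * C := mul_nonneg a1 hC
      calc _ ≤ (M * C) * 2 := mul_le_mul this h2 (by positivity) (by positivity)
        _ = _ := by ring
  have hlim : Tendsto (fun k : ℕ => ∫ x in U, (χ k x * h x + E k x)) atTop (𝓝 (∫ x in U, h x)) := by
    apply tendsto_integral_of_dominated_convergence (fun x => |h x| + 2 * M * C)
    · intro k
      refine ((hχc k).continuous.aestronglyMeasurable.mul hIntg.aestronglyMeasurable).add ?_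
      have : Continuous (E k) := by
        have := hd.continuous
        simp only [E]; fun_prop
      exact this.aestronglyMeasurable
    · exact hIntg.abs.add (integrableOn_const hUfin.ne)
    · intro k
      filter_upwards [ae_restrict_mem hUo.measurableSet] with x hx
      obtain ⟨b1, b2⟩ := hbound k x hx
      refine (norm_add_le _ _).trans (add_le_add ?_ ?_)
      · rw [norm_mul, Real.norm_of_nonneg (Real.smoothTransition.nonneg _)]
        exact mul_le_of_le_one_left (norm_nonneg _) (Real.smoothTransition.le_one _)
      · rw [Real.norm_of_nonneg b1]; exact b2
    · filter_upwards [ae_restrict_mem hUo.measurableSet] with x hx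
      have hx' : 0 < d x := hx
      apply tendsto_const_nhds.congr'
      filter_upwards [eventually_gt_atTop (Nat.ceil (2 / d x))] with k hk
      have hk' : 2 / d x < k := (Nat.le_ceil _).trans_lt (by exact_mod_cast hk)
      rw [div_lt_iff₀ hx'] at hk'
      have e1 : χ k x = 1 := Real.smoothTransition.one_of_one_le (by linarith)
      have e2 : deriv η (k * d x - 1) = 0 := (hM _).2.2.2 (by linarith)
      simp [E, e1, e2]
  exact ge_of_tendsto' hlim hmain


/-- `C¹` functions on the open ball, bounded together with their gradient. -/
structure C1b {n : ℕ} (R : ℝ) (u : EE n → ℝ) : Prop where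
  cd : ContDiffOn ℝ 1 u (ball 0 R)
  bd : ∃ C, 0 ≤ C ∧ ∀ x ∈ ball (0 : EE n) R, |u x| ≤ C ∧ ‖gradient u x‖ ≤ C

lemma norm_gradient {n : ℕ} (u : EE n → ℝ) (x : EE n) : ‖gradient u x‖ = ‖fderiv ℝ u x‖ := by
  simp [gradient]

lemma inner_gradient {n : ℕ} (u : EE n → ℝ) (x y : EE n) :
    inner ℝ (gradient u x) y = fderiv ℝ u x y := by
  simp [gradient]

lemma C1b.hasGrad {n : ℕ} {R : ℝ} {u : EE n → ℝ} (hu : C1b R u) {x : EE n} (hx : x ∈ ball 0 R) :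
    HasGradientAt u (gradient u x) x :=
  ((hu.cd.contDiffAt (isOpen_ball.mem_nhds hx)).differentiableAt (by norm_num)).hasGradientAt

lemma C1b.contGrad {n : ℕ} {R : ℝ} {u : EE n → ℝ} (hu : C1b R u) :
    ContinuousOn (gradient u) (ball 0 R) :=
  (InnerProductSpace.toDual ℝ (EE n)).symm.continuous.comp_continuousOn
    (hu.cd.continuousOn_fderiv_of_isOpen isOpen_ball (by norm_num))

lemma C1b.sub {n : ℕ} {R : ℝ} {u v : EE n → ℝ} (hu : C1b R u) (hv : C1b R v) :
    C1b R (fun x => u x - v x) ∧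
      ∀ x ∈ ball (0 : EE n) R, gradient (fun x => u x - v x) x = gradient u x - gradient v x := by
  have hg : ∀ x ∈ ball (0 : EE n) R,
      gradient (fun x => u x - v x) x = gradient u x - gradient v x := by
    intro x hx
    have h : HasGradientAt (fun x => u x - v x) (gradient u x - gradient v x) x := by
      rw [hasGradientAt_iff_hasFDerivAt, map_sub]
      exact (hu.hasGrad hx).hasFDerivAt.sub (hv.hasGrad hx).hasFDerivAt
    exact h.gradient
  refine ⟨⟨hu.cd.sub hv.cd, ?_⟩, hg⟩
  obtain ⟨C, hC, h⟩ := hu.bd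
  obtain ⟨D, hD, h'⟩ := hv.bd
  refine ⟨C + D, by positivity, fun x hx => ⟨?_, ?_⟩⟩
  · exact (abs_sub _ _).trans (add_le_add (h x hx).1 (h' x hx).1)
  · rw [hg x hx]
    exact (norm_sub_le _ _).trans (add_le_add (h x hx).2 (h' x hx).2)

lemma C1b.lip {n : ℕ} {R : ℝ} {u : EE n → ℝ} {C : ℝ} (hu : C1b R u)
    (hC : ∀ x ∈ ball (0 : EE n) R, |u x| ≤ C ∧ ‖gradient u x‖ ≤ C) {x y : EE n}
    (hx : x ∈ ball 0 R) (hy : y ∈ ball 0 R) : |u x - u y| ≤ C * ‖x - y‖ := by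
  refine Convex.norm_image_sub_le_of_norm_fderiv_le (𝕜 := ℝ) (s := ball 0 R)
    (fun z hz => (hu.hasGrad hz).differentiableAt) (fun z hz => ?_) (convex_ball _ _) hy hx
  rw [← norm_gradient]; exact (hC z hz).2

lemma integrableOn_ball {n : ℕ} {R C : ℝ} {f : EE n → ℝ} (hf : ContinuousOn f (ball 0 R))
    (hC : ∀ x ∈ ball (0 : EE n) R, |f x| ≤ C) : IntegrableOn f (ball 0 R) := by
  refine IntegrableOn.of_bound measure_ball_lt_top
    (hf.aestronglyMeasurable measurableSet_ball) C ?_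
  filter_upwards [ae_restrict_mem measurableSet_ball] with x hx
  exact hC x hx

/-- The quadratic form. -/
def QF {n : ℕ} (μ R : ℝ) (u v : EE n → ℝ) : ℝ :=
  ∫ x in ball (0 : EE n) R, (inner ℝ (gradient u x) (gradient v x) - μ * (u x * v x))

lemma C1b.integrable {n : ℕ} {R : ℝ} {u v : EE n → ℝ} (hu : C1b R u) (hv : C1b R v) (μ : ℝ) :
    IntegrableOn (fun x => inner ℝ (gradient u x) (gradient v x) - μ * (u x * v x))
      (ball (0 : EE n) R) := by
  obtain ⟨C, hC, h⟩ := hu.bd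
  obtain ⟨D, hD, h'⟩ := hv.bd
  refine integrableOn_ball (C := C * D + |μ| * (C * D)) ?_ ?_
  · exact (hu.contGrad.inner hv.contGrad).sub
      (continuousOn_const.mul (hu.cd.continuousOn.mul hv.cd.continuousOn))
  · intro x hx
    refine (abs_sub _ _).trans (add_le_add ?_ ?_)
    · exact (abs_real_inner_le_norm _ _).trans
        (mul_le_mul (h x hx).2 (h' x hx).2 (norm_nonneg _) hC)
    · rw [abs_mul, abs_mul]
      gcongr
      · exact (h x hx).1
      · exact (h' x hx).1

lemma dvg_add {n : ℕ} {V W : EE n → EE n} {x : EE n} (hV : DifferentiableAt ℝ V x)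
    (hW : DifferentiableAt ℝ W x) : dvg (fun y => V y + W y) x = dvg V x + dvg W x := by
  unfold dvg
  rw [fderiv_fun_add hV hW, ← Finset.sum_add_distrib]
  rfl

lemma dvg_const {n : ℕ} (a x : EE n) : dvg (fun _ => a) x = 0 := by
  simp [dvg]

lemma dvg_id {n : ℕ} (x : EE n) : dvg (fun y => y) x = n := by
  simp [dvg]

lemma hasGradientAt_inner {n : ℕ} (a x : EE n) : HasGradientAt (fun y => inner ℝ a y) a x := by
  rw [hasGradientAt_iff_hasFDerivAt]
  exact (InnerProductSpace.toDual ℝ (EE n) a).hasFDerivAt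

lemma hasGradientAt_normsq {n : ℕ} (x : EE n) :
    HasGradientAt (fun y : EE n => ‖y‖ ^ 2) ((2:ℝ) • x) x := by
  rw [hasGradientAt_iff_hasFDerivAt, map_smul]
  have := (hasStrictFDerivAt_norm_sq x).hasFDerivAt
  have e : (2:ℝ) • (InnerProductSpace.toDual ℝ (EE n)) x = 2 • (innerSL ℝ) x := by
    ext y; simp [two_smul, two_mul]
  rw [e]
  exact this

lemma HasGradientAt.comp_deriv {n : ℕ} {f : EE n → ℝ} {f' x : EE n} {g : ℝ → ℝ} {g' : ℝ}
    (hf : HasGradientAt f f' x) (hg : HasDerivAt g g' (f x)) :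
    HasGradientAt (fun y => g (f y)) (g' • f') x := by
  rw [hasGradientAt_iff_hasFDerivAt, map_smul]
  exact hg.comp_hasFDerivAt x hf.hasFDerivAt

lemma HasGradientAt.mulR {n : ℕ} {f g : EE n → ℝ} {f' g' x : EE n}
    (hf : HasGradientAt f f' x) (hg : HasGradientAt g g' x) :
    HasGradientAt (fun y => f y * g y) (f x • g' + g x • f') x := by
  rw [hasGradientAt_iff_hasFDerivAt, map_add, map_smul, map_smul]
  exact hf.hasFDerivAt.mul hg.hasFDerivAt

lemma hyperplane_null {n : ℕ} (a : EE n) (ha : a ≠ 0) :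
    volume {x : EE n | inner ℝ a x = 0} = 0 := by
  have h : {x : EE n | inner ℝ a x = 0} = ((ℝ ∙ a)ᗮ : Submodule ℝ (EE n)) := by
    ext x; simp [Submodule.mem_orthogonal_singleton_iff_inner_right]
  rw [h]
  apply Measure.addHaar_submodule
  intro htop
  have : a ∈ (ℝ ∙ a)ᗮ := by rw [htop]; trivial
  rw [Submodule.mem_orthogonal_singleton_iff_inner_right] at this
  exact ha (inner_self_eq_zero.1 this)

lemma picone {n : ℕ} {R μ K : ℝ} (hR : 0 < R) (q : ℝ → ℝ)
    (hq : ∀ s ∈ Ico 0 (R ^ 2), ContDiffAt ℝ 1 q s)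
    (hric : ∀ s ∈ Ico 0 (R ^ 2), 4 * s * deriv q s + (2 * n + 4) * q s + 4 * s * q s ^ 2 + μ = 0)
    (hK : ∀ s ∈ Ico 0 (R ^ 2), |q s| ≤ K) (hpos : ∀ s ∈ Ico 0 (R ^ 2), 0 ≤ 1 + 2 * s * q s)
    (a : EE n) (ha : ‖a‖ = 1) (w : EE n → ℝ) (hw : C1b R w)
    (hw0 : ∀ x ∈ ball (0 : EE n) R, inner ℝ a x = 0 → w x = 0) : 0 ≤ QF μ R w w := by
  obtain ⟨C, hC, hCb⟩ := hw.bd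
  have hK0 : 0 ≤ K := (abs_nonneg _).trans (hK 0 ⟨le_rfl, by positivity⟩)
  have haa : inner ℝ a a = (1:ℝ) := by simp [ha]
  have hballs : ∀ x : EE n, x ∈ ball 0 R → ‖x‖ ^ 2 ∈ Ico 0 (R ^ 2) := by
    intro x hx
    rw [mem_ball_zero_iff] at hx
    exact ⟨by positivity, by gcongr⟩
  let d : EE n → ℝ := fun x => (R ^ 2 - ‖x‖ ^ 2) * (inner ℝ a x) ^ 2
  have hdpos : ∀ x, 0 < d x ↔ x ∈ ball 0 R ∧ inner ℝ a x ≠ 0 := by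
    intro x
    simp only [d, mem_ball_zero_iff]
    constructor
    · intro h
      have h0 : inner ℝ a x ≠ 0 := by
        intro h0; simp [h0] at h
      refine ⟨?_, h0⟩
      have h1 : 0 < R ^ 2 - ‖x‖ ^ 2 := by
        have : 0 < (inner ℝ a x) ^ 2 := by positivity
        exact pos_of_mul_pos_left h this.le
      exact lt_of_pow_lt_pow_left₀ 2 hR.le (by linarith)
    · rintro ⟨h1, h2⟩
      have : ‖x‖ ^ 2 < R ^ 2 := by gcongr
      have h3 : 0 < R ^ 2 - ‖x‖ ^ 2 := by linarith
      positivity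
  have hdc : ContDiff ℝ 1 d := by
    have : ContDiff ℝ 1 (fun x : EE n => ‖x‖ ^ 2) := contDiff_norm_sq ℝ
    have h2 : ContDiff ℝ 1 (fun x : EE n => inner ℝ a x) := contDiff_const.inner ℝ contDiff_id
    exact (contDiff_const.sub this).mul (h2.pow 2)
  have hsub : {x | 0 < d x} ⊆ ball 0 R := fun x hx => ((hdpos x).1 hx).1
  let X : EE n → EE n := fun x => (inner ℝ a x)⁻¹ • a + (2 * q (‖x‖ ^ 2)) • x
  let W : EE n → EE n := fun x => (w x * w x) • X x
  have hae : ball (0 : EE n) R =ᵐ[volume] {x | 0 < d x} := by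
    have hnull : ∀ᵐ x : EE n, x ∉ {x : EE n | inner ℝ a x = 0} :=
      measure_eq_zero_iff_ae_notMem.1 (hyperplane_null a (by rintro rfl; simp at ha))
    filter_upwards [hnull] with x hx
    apply propext
    change x ∈ ball 0 R ↔ 0 < d x
    rw [hdpos]
    exact ⟨fun h => ⟨h, hx⟩, fun h => h.1⟩
  unfold QF
  rw [setIntegral_congr_set hae]
  have hgdX : ∀ x, x ∈ ball 0 R → inner ℝ a x ≠ 0 →
      ContDiffAt ℝ 1 (fun x : EE n => (inner ℝ a x)⁻¹) x ∧
      ContDiffAt ℝ 1 (fun x : EE n => 2 * q (‖x‖ ^ 2)) x := by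
    intro x hx hax
    have h1 : ContDiffAt ℝ 1 (fun x : EE n => inner ℝ a x) x :=
      (contDiff_const.inner ℝ contDiff_id).contDiffAt
    refine ⟨h1.inv hax, ?_⟩
    have h2 : ContDiffAt ℝ 1 (fun x : EE n => ‖x‖ ^ 2) x := (contDiff_norm_sq ℝ).contDiffAt
    exact contDiffAt_const.mul ((hq _ (hballs x hx)).comp x h2)
  have hXc : ∀ x, x ∈ ball 0 R → inner ℝ a x ≠ 0 → ContDiffAt ℝ 1 X x := fun x hx hax =>
    ((hgdX x hx hax).1.smul contDiffAt_const).add ((hgdX x hx hax).2.smul contDiffAt_id)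
  have hdX : ∀ x, x ∈ ball 0 R → inner ℝ a x ≠ 0 → dvg X x = - ‖X x‖ ^ 2 - μ := by
    intro x hx hax
    have g1 : HasGradientAt (fun x : EE n => (inner ℝ a x)⁻¹) ((-(inner ℝ a x ^ 2)⁻¹) • a) x :=
      (hasGradientAt_inner a x).comp_deriv (hasDerivAt_inv hax)
    have g2 : HasGradientAt (fun x : EE n => 2 * q (‖x‖ ^ 2))
        ((2 * deriv q (‖x‖ ^ 2)) • (2:ℝ) • x) x :=
      (hasGradientAt_normsq x).comp_deriv (g := fun s => 2 * q s)
        ((((hq _ (hballs x hx)).differentiableAt (by norm_num)).hasDerivAt).const_mul 2)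
    have e1 : dvg X x = dvg (fun x => (inner ℝ a x)⁻¹ • a) x
        + dvg (fun x => (2 * q (‖x‖ ^ 2)) • x) x :=
      dvg_add (g1.differentiableAt.smul_const a) (g2.differentiableAt.smul differentiableAt_id)
    rw [e1, dvg_smul _ (fun _ => a) x g1 (differentiableAt_const _),
      dvg_smul _ (fun y => y) x g2 differentiableAt_id, dvg_const, dvg_id]
    have hr := hric _ (hballs x hx)
    have e2 : ‖X x‖ ^ 2 = (inner ℝ a x)⁻¹ ^ 2 + 4 * q (‖x‖ ^ 2)
        + 4 * q (‖x‖ ^ 2) ^ 2 * ‖x‖ ^ 2 := by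
      rw [← real_inner_self_eq_norm_sq]
      simp only [X, inner_add_left, inner_add_right, inner_smul_left, inner_smul_right, haa,
        real_inner_comm a x, conj_trivial, real_inner_self_eq_norm_sq]
      field_simp
      ring
    rw [e2]
    simp only [inner_smul_left, haa, conj_trivial, real_inner_self_eq_norm_sq]
    have : (inner ℝ a x)⁻¹ ^ 2 = (inner ℝ a x ^ 2)⁻¹ := inv_pow _ _
    rw [this]
    linear_combination hr
  apply div_lemma d hdc (isBounded_ball.subset hsub) W _ _ _ _
    (2 * C ^ 2 * (1 + 2 * K * R ^ 2)) (by positivity) _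
  · intro x hx
    obtain ⟨h1, h2⟩ := (hdpos x).1 hx
    have hwx := hw.cd.contDiffAt (isOpen_ball.mem_nhds h1)
    exact ((hwx.mul hwx).smul (hXc x h1 h2)).contDiffWithinAt
  · exact (hw.integrable hw μ).mono_set hsub
  · intro x hx
    obtain ⟨h1, h2⟩ := (hdpos x).1 hx
    have hg := hw.hasGrad h1
    simp only [W]
    rw [dvg_smul _ _ x (hg.mulR hg) ((hXc x h1 h2).differentiableAt (by norm_num)), hdX x h1 h2]
    have hnn : 0 ≤ ‖gradient w x - w x • X x‖ ^ 2 := by positivity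
    rw [norm_sub_sq_real, norm_smul, mul_pow, inner_smul_right, Real.norm_eq_abs, sq_abs] at hnn
    rw [inner_add_left, inner_smul_left, real_inner_self_eq_norm_sq]
    simp only [conj_trivial]
    nlinarith
  · intro x hx
    obtain ⟨h1, h2⟩ := (hdpos x).1 hx
    have hs := hballs x h1
    have gd : HasGradientAt d ((R ^ 2 - ‖x‖ ^ 2) • ((2 * inner ℝ a x) • a)
        + (inner ℝ a x ^ 2) • (-((2:ℝ) • x))) x := by
      have k1 : HasGradientAt (fun y : EE n => R ^ 2 - ‖y‖ ^ 2) (-((2:ℝ) • x)) x := by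
        have := (hasGradientAt_normsq x).comp_deriv (g := fun s => R ^ 2 - s)
          ((hasDerivAt_id _).const_sub _)
        simpa using this
      have k2 : HasGradientAt (fun y : EE n => inner ℝ a y ^ 2) ((2 * inner ℝ a x) • a) x := by
        have := (hasGradientAt_inner a x).comp_deriv (hasDerivAt_pow 2 _)
        simpa using this
      exact k1.mulR k2
    rw [gd.gradient]
    have e1 : inner ℝ a (X x) = (inner ℝ a x)⁻¹ + 2 * q (‖x‖ ^ 2) * inner ℝ a x := by
      simp [X, inner_add_right, inner_smul_right, ha]
    have e2 : inner ℝ x (X x) = 1 + 2 * ‖x‖ ^ 2 * q (‖x‖ ^ 2) := by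
      simp only [X, inner_add_right, inner_smul_right, real_inner_comm a x,
        real_inner_self_eq_norm_sq]
      rw [inv_mul_cancel₀ h2]; ring
    set t := inner ℝ a x with ht
    have e3 : inner ℝ ((R ^ 2 - ‖x‖ ^ 2) • (2 * t) • a + t ^ 2 • -((2:ℝ) • x)) (W x)
        = w x ^ 2 * (2 * (R ^ 2 - ‖x‖ ^ 2) * (1 + 2 * q (‖x‖ ^ 2) * t ^ 2))
          - w x ^ 2 * (2 * t ^ 2 * (1 + 2 * ‖x‖ ^ 2 * q (‖x‖ ^ 2))) := by
      simp only [W, inner_add_left, inner_smul_left, inner_smul_right, inner_neg_left, e1, e2,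
        conj_trivial]
      field_simp
      ring
    rw [e3]
    have hn1 : 0 ≤ w x ^ 2 * (2 * t ^ 2 * (1 + 2 * ‖x‖ ^ 2 * q (‖x‖ ^ 2))) := by
      have := hpos _ hs
      positivity
    -- |w x| ≤ C |t|
    have hwt : |w x| ≤ C * |t| := by
      set y := x - t • a with hy
      have hay : inner ℝ a y = 0 := by simp [hy, inner_sub_right, inner_smul_right, ha, ht]
      have hyb : y ∈ ball (0 : EE n) R := by
        rw [mem_ball_zero_iff] at h1 ⊢
        refine lt_of_le_of_lt ?_ h1
        have : ‖x‖ ^ 2 = ‖y‖ ^ 2 + t ^ 2 := by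
          have hx' : x = y + t • a := by simp [hy]
          have hya : inner ℝ y a = 0 := by rw [real_inner_comm]; exact hay
          conv_lhs => rw [hx']
          rw [norm_add_sq_real, inner_smul_right, hya, norm_smul, ha]
          simp
        exact le_of_sq_le_sq (by nlinarith [sq_nonneg t]) (norm_nonneg _)
      have := hw.lip hCb h1 hyb
      rw [hw0 y hyb hay, sub_zero] at this
      simpa [hy, norm_smul, ha] using this
    have hw2 : w x ^ 2 ≤ C ^ 2 * t ^ 2 := by
      rw [← sq_abs (w x), ← sq_abs t, ← mul_pow]
      gcongr
    have htR : t ^ 2 ≤ R ^ 2 := by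
      rw [← sq_abs t]
      have : |t| ≤ ‖x‖ := by simpa [ha] using abs_real_inner_le_norm a x
      have h3 := (mem_ball_zero_iff.1 h1).le
      exact pow_le_pow_left₀ (abs_nonneg _) (this.trans h3) 2
    have hq1 : 1 + 2 * q (‖x‖ ^ 2) * t ^ 2 ≤ 1 + 2 * K * R ^ 2 := by
      have := (le_abs_self _).trans (hK _ hs)
      have : q (‖x‖ ^ 2) * t ^ 2 ≤ K * R ^ 2 :=
        mul_le_mul this htR (by positivity) hK0
      linarith
    have hs1 : 0 ≤ R ^ 2 - ‖x‖ ^ 2 := by linarith [hs.2]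
    calc _ ≤ w x ^ 2 * (2 * (R ^ 2 - ‖x‖ ^ 2) * (1 + 2 * q (‖x‖ ^ 2) * t ^ 2)) := by linarith
      _ ≤ w x ^ 2 * (2 * (R ^ 2 - ‖x‖ ^ 2) * (1 + 2 * K * R ^ 2)) := by gcongr
      _ ≤ (C ^ 2 * t ^ 2) * (2 * (R ^ 2 - ‖x‖ ^ 2) * (1 + 2 * K * R ^ 2)) := by gcongr
      _ = _ := by simp only [d]; ring


/-- Power series with real coefficients. -/
def PS (c : ℕ → ℝ) (z : ℝ) : ℝ := ∑' k, c k * z ^ k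

/-- Coefficients of the derivative. -/
def dco (c : ℕ → ℝ) (k : ℕ) : ℝ := (k + 1) * c (k + 1)

lemma dco_bound {c : ℕ → ℝ} (hc : ∀ k, |c k| ≤ 1 / (k.factorial : ℝ)) :
    ∀ k, |dco c k| ≤ 1 / (k.factorial : ℝ) := by
  intro k
  have := hc (k + 1)
  unfold dco
  rw [abs_mul, abs_of_nonneg (by positivity : (0:ℝ) ≤ k + 1)]
  rw [Nat.factorial_succ] at this
  push_cast at this
  calc ((k:ℝ) + 1) * |c (k + 1)| ≤ (k + 1) * (1 / ((k + 1) * k.factorial)) := by gcongr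
    _ = _ := by field_simp

lemma PS_summable {c : ℕ → ℝ} (hc : ∀ k, |c k| ≤ 1 / (k.factorial : ℝ)) (z : ℝ) :
    Summable (fun k => c k * z ^ k) := by
  refine Summable.of_norm_bounded (Real.summable_pow_div_factorial |z|) fun k => ?_
  rw [Real.norm_eq_abs, abs_mul, abs_pow]
  calc |c k| * |z| ^ k ≤ 1 / (k.factorial : ℝ) * |z| ^ k := by gcongr; exact hc k
    _ = _ := by ring

lemma PS_deriv {c : ℕ → ℝ} (hc : ∀ k, |c k| ≤ 1 / (k.factorial : ℝ)) (z : ℝ) :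
    HasDerivAt (PS c) (PS (dco c) z) z := by
  set r := |z| + 1 with hr
  have hr0 : 0 ≤ r := by positivity
  let bnd : ℕ → ℝ := fun k => k * r ^ (k - 1) / (k.factorial : ℝ)
  have hsum : Summable bnd := by
    rw [← summable_nat_add_iff 1]
    refine (Real.summable_pow_div_factorial r).congr fun k => ?_
    simp only [bnd, Nat.factorial_succ, Nat.add_sub_cancel]
    push_cast
    field_simp
  have key := hasDerivAt_tsum_of_isPreconnected (g := fun k z => c k * z ^ k)
    (g' := fun k z => c k * (k * z ^ (k - 1))) hsum (isOpen_ball : IsOpen (ball (0:ℝ) r))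
    (convex_ball (0:ℝ) r).isPreconnected
    (fun k y _ => (hasDerivAt_pow k y).const_mul (c k))
    (fun k y hy => by
      rw [mem_ball_zero_iff, Real.norm_eq_abs] at hy
      rw [Real.norm_eq_abs, abs_mul, abs_mul, abs_pow, Nat.abs_cast]
      calc |c k| * (k * |y| ^ (k - 1)) ≤ 1 / (k.factorial : ℝ) * (k * r ^ (k - 1)) := by
            gcongr; exact hc k
        _ = _ := by simp only [bnd]; ring)
    (show (0:ℝ) ∈ ball (0:ℝ) r by simp; positivity) (PS_summable hc 0)
    (show z ∈ ball (0:ℝ) r by simp [hr])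
  have e : PS (dco c) z = ∑' k, c k * (k * z ^ (k - 1)) := by
    have hs : Summable (fun k : ℕ => c k * (k * z ^ (k - 1))) := by
      rw [← summable_nat_add_iff 1]
      refine (PS_summable (dco_bound hc) z).congr fun k => ?_
      simp [dco]; ring
    rw [hs.tsum_eq_zero_add]
    simp only [PS, dco]
    simp
    congr 1; ext k; ring
  rw [e]
  exact key

lemma PS_contDiff (m : ℕ) : ∀ {c : ℕ → ℝ} (_ : ∀ k, |c k| ≤ 1 / (k.factorial : ℝ)),
    ContDiff ℝ m (PS c) := by
  induction m with
  | zero =>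
    intro c hc
    rw [Nat.cast_zero, contDiff_zero]
    exact continuous_iff_continuousAt.2 fun z => (PS_deriv hc z).continuousAt
  | succ m ih =>
    intro c hc
    push_cast
    rw [contDiff_succ_iff_deriv]
    refine ⟨fun z => (PS_deriv hc z).differentiableAt, by simp, ?_⟩
    have : deriv (PS c) = PS (dco c) := funext fun z => (PS_deriv hc z).deriv
    rw [this]
    exact ih (dco_bound hc)

/-- Coefficients of the Bessel-type function. -/
def bco (n : ℕ) : ℕ → ℝ
  | 0 => 1
  | (k + 1) => - bco n k / ((k + 1) * (4 * k + 2 * n + 4))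

lemma bco_bound (n : ℕ) : ∀ k, |bco n k| ≤ 1 / (k.factorial : ℝ) := by
  intro k
  induction k with
  | zero => simp [bco]
  | succ k ih =>
    rw [bco, abs_div, abs_neg, abs_of_nonneg (by positivity : (0:ℝ) ≤ (k + 1) * (4 * k + 2 * n + 4)),
      Nat.factorial_succ]
    push_cast
    rw [div_le_div_iff₀ (by positivity) (by positivity)]
    rw [le_div_iff₀ (by positivity)] at ih
    have h1 : (1:ℝ) ≤ 4 * k + 2 * n + 4 := by
      have : (0:ℝ) ≤ k := by positivity
      have : (0:ℝ) ≤ n := by positivity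
      linarith
    calc |bco n k| * ((k + 1) * k.factorial) = (|bco n k| * k.factorial) * (k + 1) := by ring
      _ ≤ 1 * (k + 1) := by gcongr
      _ = 1 * ((k + 1) * 1) := by ring
      _ ≤ _ := by gcongr

lemma bessel_pack (n : ℕ) : ∃ F : ℝ → ℝ, ContDiff ℝ (⊤ : ℕ∞) F ∧ F 0 = 1 ∧
    ∀ z, 4 * z * deriv (deriv F) z + (2 * n + 4) * deriv F z + F z = 0 := by
  have hb := bco_bound n
  have d1 : deriv (PS (bco n)) = PS (dco (bco n)) := funext fun z => (PS_deriv hb z).deriv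
  have d2 : deriv (PS (dco (bco n))) = PS (dco (dco (bco n))) :=
    funext fun z => (PS_deriv (dco_bound hb) z).deriv
  refine ⟨PS (bco n), contDiff_infty.2 fun m => PS_contDiff m hb, ?_, ?_⟩
  · unfold PS
    rw [tsum_eq_single 0]
    · simp [bco]
    · intro k hk; simp [hk]
  · intro z
    rw [d1, d2]
    have s0 := PS_summable hb z
    have s1 := PS_summable (dco_bound hb) z
    have s2 := PS_summable (dco_bound (dco_bound hb)) z
    -- z * F'' = ∑ k * c' k * z^k
    have e2 : z * PS (dco (dco (bco n))) z = ∑' k : ℕ, (k * dco (bco n) k) * z ^ k := by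
      have hs : Summable (fun k : ℕ => (k * dco (bco n) k) * z ^ k) := by
        rw [← summable_nat_add_iff 1]
        refine (s2.mul_left z).congr fun k => ?_
        rw [dco]; push_cast; ring
      rw [hs.tsum_eq_zero_add, PS, ← tsum_mul_left]
      simp
      congr 1; ext k
      rw [dco]; ring
    have hs : Summable (fun k : ℕ => (k * dco (bco n) k) * z ^ k) := by
      rw [← summable_nat_add_iff 1]
      refine (s2.mul_left z).congr fun k => ?_
      rw [dco]; push_cast; ring
    rw [mul_assoc, e2]
    simp only [PS]
    rw [← tsum_mul_left, ← tsum_mul_left, ← (hs.mul_left 4).tsum_add (s1.mul_left _),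
      ← ((hs.mul_left 4).add (s1.mul_left _)).tsum_add s0]
    convert tsum_zero with k
    have : dco (bco n) k = - bco n k / (4 * k + 2 * n + 4) := by
      rw [dco, bco]; field_simp
    rw [this]
    field_simp
    ring

lemma uniqueDiff_cb {n : ℕ} {R : ℝ} (hR : 0 < R) :
    UniqueDiffOn ℝ (closedBall (0 : EE n) R) :=
  uniqueDiffOn_convex (convex_closedBall _ _)
    ⟨0, ball_subset_interior_closedBall (mem_ball_self hR)⟩

lemma fdw_eq {n : ℕ} {R : ℝ} (f : EE n → ℝ) {x : EE n} (hx : x ∈ ball (0 : EE n) R) :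
    fderivWithin ℝ f (closedBall 0 R) x = fderiv ℝ f x :=
  fderivWithin_of_mem_nhds (mem_of_superset (isOpen_ball.mem_nhds hx) ball_subset_closedBall)

lemma lap_eq_dvg {n : ℕ} {R : ℝ} {g : EE n → ℝ} {x : EE n} (hx : x ∈ ball (0 : EE n) R)
    (hg : DifferentiableAt ℝ (gradient g) x) :
    lapWithin (closedBall 0 R) g x = dvg (gradient g) x := by
  unfold lapWithin dvg
  refine Finset.sum_congr rfl fun i _ => ?_
  rw [fdw_eq _ hx]
  have h1 : (fun y => fderivWithin ℝ g (closedBall 0 R) y (EuclideanSpace.single i 1))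
      =ᶠ[𝓝 x] fun y => (gradient g y) i := by
    filter_upwards [isOpen_ball.mem_nhds hx] with y hy
    rw [fdw_eq _ hy, ← inner_gradient, EuclideanSpace.inner_single_right, one_mul, conj_trivial]
  rw [h1.fderiv_eq]
  have h2 := (EuclideanSpace.proj (𝕜 := ℝ) i : EE n →L[ℝ] ℝ).hasFDerivAt.comp x hg.hasFDerivAt
  have h3 : HasFDerivAt (fun y => (gradient g y) i)
        ((EuclideanSpace.proj (𝕜 := ℝ) i : EE n →L[ℝ] ℝ).comp (fderiv ℝ (gradient g) x)) x := h2
  rw [h3.fderiv]; rfl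

lemma bessel_eigen {n : ℕ} (hn : 1 ≤ n) {R : ℝ} (hR : 0 < R) {F : ℝ → ℝ}
    (hF : ContDiff ℝ (⊤ : ℕ∞) F) (hF0 : F 0 = 1)
    (hode : ∀ z, 4 * z * deriv (deriv F) z + (2 * n + 4) * deriv F z + F z = 0) {l : ℝ}
    (hP : F (l * R ^ 2) + 2 * (l * R ^ 2) * deriv F (l * R ^ 2) = 0) :
    IsLapNeumannEigenvalueBall n R l := by
  let i0 : Fin n := ⟨0, hn⟩
  let a : EE n := eb i0
  have haa : inner ℝ a a = (1:ℝ) := by simp [a]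
  let ψ : EE n → ℝ := fun x => inner ℝ a x * F (l * ‖x‖ ^ 2)
  have hF' : ContDiff ℝ (⊤ : ℕ∞) (deriv F) := ((contDiff_succ_iff_deriv (n := (⊤ : ℕ∞))).1 hF).2.2
  have hdF : ∀ z, HasDerivAt F (deriv F z) z := fun z =>
    (hF.differentiable (by simp) z).hasDerivAt
  have hdF' : ∀ z, HasDerivAt (deriv F) (deriv (deriv F) z) z := fun z =>
    (hF'.differentiable (by simp) z).hasDerivAt
  have hgF : ∀ (G G' : ℝ → ℝ) (_ : ∀ z, HasDerivAt G (G' z) z) (x : EE n),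
      HasGradientAt (fun x : EE n => G (l * ‖x‖ ^ 2)) ((2 * l * G' (l * ‖x‖ ^ 2)) • x) x := by
    intro G G' hG x
    have h1 : HasDerivAt (fun s => G (l * s)) (G' (l * ‖x‖ ^ 2) * l) (‖x‖ ^ 2) := by
      have e : G' (l * ‖x‖ ^ 2) * (l * 1) = G' (l * ‖x‖ ^ 2) * l := by ring
      rw [← e]
      exact HasDerivAt.comp (h₂ := G) (h := fun s => l * s) (‖x‖ ^ 2) (hG (l * ‖x‖ ^ 2))
        ((hasDerivAt_id (‖x‖ ^ 2)).const_mul l)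
    have := (hasGradientAt_normsq x).comp_deriv h1
    rw [smul_smul] at this
    convert this using 2
    ring
  have hgψ : ∀ x, HasGradientAt ψ
      (F (l * ‖x‖ ^ 2) • a + (2 * l * (inner ℝ a x * deriv F (l * ‖x‖ ^ 2))) • x) x := by
    intro x
    have := (hasGradientAt_inner a x).mulR (hgF F _ hdF x)
    convert this using 1
    rw [smul_smul, add_comm]
    congr 2
    ring
  have hψg : gradient ψ = fun x => F (l * ‖x‖ ^ 2) • a +
      (2 * l * (inner ℝ a x * deriv F (l * ‖x‖ ^ 2))) • x := funext fun x => (hgψ x).gradient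
  have hns : ContDiff ℝ (⊤ : ℕ∞) (fun x : EE n => ‖x‖ ^ 2) := contDiff_norm_sq ℝ
  have hψc : ContDiff ℝ (⊤ : ℕ∞) ψ := by
    have h2 : ContDiff ℝ (⊤ : ℕ∞) (fun x : EE n => inner ℝ a x) := contDiff_const.inner ℝ contDiff_id
    exact h2.mul (hF.comp (contDiff_const.mul hns))
  refine ⟨ψ, hψc.contDiffOn, ?_, ?_, ?_⟩
  · -- nonzero
    have hcont : Continuous (fun t : ℝ => F (l * t ^ 2)) := by
      have := hF.continuous
      fun_prop
    have h1 : ∀ᶠ t in 𝓝 (0:ℝ), 0 < F (l * t ^ 2) := by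
      apply hcont.continuousAt.eventually
      apply lt_mem_nhds
      simp [hF0]
    have h2 : ∀ᶠ t in 𝓝[>] (0:ℝ), 0 < F (l * t ^ 2) ∧ t < R ∧ 0 < t := by
      filter_upwards [h1.filter_mono nhdsWithin_le_nhds,
        (gt_mem_nhds hR).filter_mono nhdsWithin_le_nhds, self_mem_nhdsWithin] with t a b c
      exact ⟨a, b, c⟩
    obtain ⟨t, ht1, ht2, ht3⟩ := h2.exists
    have hnorm : ‖t • a‖ = t := by simp [norm_smul, a, abs_of_pos ht3]
    refine ⟨t • a, by rw [mem_closedBall_zero_iff, hnorm]; exact ht2.le, ?_⟩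
    simp only [ψ]
    rw [hnorm, inner_smul_right, haa]
    positivity
  · intro x hx
    have g1 := hgF F _ hdF x
    have g2 : HasGradientAt (fun x => 2 * l * (inner ℝ a x * deriv F (l * ‖x‖ ^ 2)))
      ((2 * l) • (inner ℝ a x • ((2 * l * deriv (deriv F) (l * ‖x‖ ^ 2)) • x)
        + deriv F (l * ‖x‖ ^ 2) • a)) x := by
      have := ((hasGradientAt_inner a x).mulR (hgF _ _ hdF' x)).comp_deriv
        (g := fun s => 2 * l * s) ((hasDerivAt_id _).const_mul (2 * l))
      simpa using this
    have hd1 : DifferentiableAt ℝ (fun x : EE n => F (l * ‖x‖ ^ 2) • a) x :=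
      g1.differentiableAt.smul_const a
    have hd2 : DifferentiableAt ℝ
      (fun x : EE n => (2 * l * (inner ℝ a x * deriv F (l * ‖x‖ ^ 2))) • x) x :=
      g2.differentiableAt.smul differentiableAt_id
    rw [lap_eq_dvg hx (by rw [hψg]; exact hd1.add hd2), hψg, dvg_add hd1 hd2,
      dvg_smul _ (fun _ => a) x g1 (differentiableAt_const _),
      dvg_smul _ (fun y => y) x g2 differentiableAt_id, dvg_const, dvg_id]
    simp only [ψ, inner_add_left, inner_smul_left, real_inner_self_eq_norm_sq, conj_trivial,
      real_inner_comm a x]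
    have := hode (l * ‖x‖ ^ 2)
    linear_combination (l * inner ℝ a x) * this
  · intro x hx
    have hxm : x ∈ closedBall (0 : EE n) R := by rw [mem_closedBall_zero_iff, hx]
    rw [(hgψ x).differentiableAt.fderivWithin (uniqueDiff_cb hR x hxm), ← inner_gradient, hψg]
    simp only [inner_add_left, inner_smul_left, inner_smul_right, conj_trivial,
      real_inner_self_eq_norm_sq, hx]
    linear_combination (R⁻¹ * inner ℝ a x) * hP


/-- The odd property: nonnegativity of the quadratic form for functions vanishing on a hyperplane. -/
def OddProp (n : ℕ) (μ R : ℝ) : Prop :=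
  ∀ (a : EE n), a ≠ 0 → ∀ w : EE n → ℝ, C1b R w →
    (∀ x ∈ ball (0 : EE n) R, inner ℝ a x = 0 → w x = 0) → 0 ≤ QF μ R w w

lemma oddProp_of_least {n : ℕ} (hn : 1 ≤ n) {R : ℝ} (hR : 0 < R) {μ : ℝ}
    (hμ : IsLeast {μ : ℝ | 0 < μ ∧ IsLapNeumannEigenvalueBall n R μ} μ) : OddProp n μ R := by
  obtain ⟨F, hF, hF0, hode⟩ := bessel_pack n
  have hμ0 : 0 < μ := hμ.1.1
  have hF' : ContDiff ℝ (⊤ : ℕ∞) (deriv F) := ((contDiff_succ_iff_deriv (n := (⊤ : ℕ∞))).1 hF).2.2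
  have hdF : ∀ z, HasDerivAt F (deriv F z) z := fun z =>
    (hF.differentiable (by simp) z).hasDerivAt
  have hdF' : ∀ z, HasDerivAt (deriv F) (deriv (deriv F) z) z := fun z =>
    (hF'.differentiable (by simp) z).hasDerivAt
  let P : ℝ → ℝ := fun z => F z + 2 * z * deriv F z
  have hFc := hF.continuous
  have hFc' := hF'.continuous
  have hPc : Continuous P := by fun_prop
  have hPne : ∀ z, 0 < z → z < μ * R ^ 2 → P z ≠ 0 := by
    intro z hz1 hz2 hz
    have e : z / R ^ 2 * R ^ 2 = z := by field_simp
    have hE := bessel_eigen hn hR hF hF0 hode (l := z / R ^ 2) (by rw [e]; exact hz)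
    have := hμ.2 ⟨by positivity, hE⟩
    rw [le_div_iff₀ (by positivity)] at this
    linarith
  have hPpos : ∀ z, 0 ≤ z → z < μ * R ^ 2 → 0 < P z := by
    intro z hz1 hz2
    by_contra hcon
    push Not at hcon
    have h0 : (0:ℝ) ∈ Icc (P z) (P 0) := ⟨hcon, by simp [P, hF0]⟩
    obtain ⟨y, hy, hy0⟩ := intermediate_value_Icc' hz1 hPc.continuousOn h0
    have hy1 : y ≠ 0 := by
      rintro rfl
      simp [P, hF0] at hy0
    exact hPne y (lt_of_le_of_ne hy.1 (Ne.symm hy1)) (lt_of_le_of_lt hy.2 hz2) hy0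
  set T := Real.sqrt (μ * R ^ 2) with hT
  have hT2 : T ^ 2 = μ * R ^ 2 := Real.sq_sqrt (by positivity)
  have hTpos : 0 < T := Real.sqrt_pos.2 (by positivity)
  have hy : ∀ r, HasDerivAt (fun r : ℝ => r * F (r ^ 2)) (P (r ^ 2)) r := by
    intro r
    have h1 : HasDerivAt (fun r : ℝ => F (r ^ 2)) (deriv F (r ^ 2) * (2 * r)) r := by
      have h2 : HasDerivAt (fun r : ℝ => r ^ 2) (2 * r) r := by simpa using hasDerivAt_pow 2 r
      exact HasDerivAt.comp (h₂ := F) (h := fun r : ℝ => r ^ 2) r (hdF _) h2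
    have := (hasDerivAt_id r).mul h1
    have e : P (r ^ 2) = 1 * F (r ^ 2) + r * (deriv F (r ^ 2) * (2 * r)) := by
      simp only [P]; ring
    rw [e]
    exact this
  have hmono : StrictMonoOn (fun r : ℝ => r * F (r ^ 2)) (Icc 0 T) := by
    apply strictMonoOn_of_deriv_pos (convex_Icc _ _) (by fun_prop)
    intro r hr
    rw [interior_Icc] at hr
    rw [(hy r).deriv]
    apply hPpos _ (by positivity)
    rw [← hT2]
    exact pow_lt_pow_left₀ hr.2 hr.1.le two_ne_zero
  have hFpos : ∀ z, 0 ≤ z → z ≤ μ * R ^ 2 → 0 < F z := by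
    intro z hz1 hz2
    rcases hz1.eq_or_lt with rfl | hz
    · rw [hF0]; norm_num
    · have hs : 0 < Real.sqrt z := Real.sqrt_pos.2 hz
      have := hmono (left_mem_Icc.2 hTpos.le) ⟨hs.le, Real.sqrt_le_sqrt hz2⟩ hs
      simp only [zero_mul] at this
      rw [Real.sq_sqrt hz1] at this
      exact (pos_iff_pos_of_mul_pos this).1 hs
  let q : ℝ → ℝ := fun s => μ * deriv F (μ * s) / F (μ * s)
  have hFs : ∀ s ∈ Icc 0 (R ^ 2), 0 < F (μ * s) := fun s hs =>
    hFpos _ (mul_nonneg hμ0.le hs.1) (by gcongr; exact hs.2)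
  have hqc : ContinuousOn q (Icc 0 (R ^ 2)) := by
    apply ContinuousOn.div (by fun_prop) (by fun_prop)
    intro s hs
    exact (hFs s hs).ne'
  obtain ⟨K, hK⟩ := isCompact_Icc.exists_bound_of_continuousOn hqc
  intro a ha w hw hw0
  refine picone (K := K) hR q ?_ ?_ ?_ ?_ (‖a‖⁻¹ • a) ?_ w hw ?_
  · intro s hs
    have h1 : ContDiff ℝ 1 (fun s => μ * deriv F (μ * s)) :=
      contDiff_const.mul ((hF'.of_le (by norm_cast)).comp (contDiff_const.mul contDiff_id))
    have h2 : ContDiff ℝ 1 (fun s => F (μ * s)) :=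
      ((hF.of_le (by norm_cast)).comp (contDiff_const.mul contDiff_id))
    exact h1.contDiffAt.div h2.contDiffAt (hFs s (Ico_subset_Icc_self hs)).ne'
  · intro s hs
    have hne := (hFs s (Ico_subset_Icc_self hs)).ne'
    have hl : HasDerivAt (fun s => μ * s) μ s := by simpa using (hasDerivAt_id s).const_mul μ
    have h1 : HasDerivAt (fun s => F (μ * s)) (deriv F (μ * s) * μ) s :=
      HasDerivAt.comp (h₂ := F) (h := fun s => μ * s) s (hdF _) hl
    have h2 : HasDerivAt (fun s => deriv F (μ * s)) (deriv (deriv F) (μ * s) * μ) s :=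
      HasDerivAt.comp (h₂ := deriv F) (h := fun s => μ * s) s (hdF' _) hl
    have h3 := ((h2.const_mul μ).div h1 hne).deriv
    have h4 : deriv q s = _ := h3
    rw [h4]
    simp only [q]
    have := hode (μ * s)
    generalize F (μ * s) = A at *
    generalize deriv F (μ * s) = B at *
    generalize deriv (deriv F) (μ * s) = D at *
    clear h1 h2 h3 h4
    field_simp
    linear_combination (μ * A) * this
  · intro s hs
    exact hK s (Ico_subset_Icc_self hs)
  · intro s hs
    have hpos := hFs s (Ico_subset_Icc_self hs)
    have hp := hPpos (μ * s) (mul_nonneg hμ0.le hs.1) (by gcongr; exact hs.2)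
    have : 1 + 2 * s * q s = P (μ * s) / F (μ * s) := by
      simp only [q, P]
      generalize F (μ * s) = A at *
      field_simp
    rw [this]; positivity
  · rw [norm_smul, norm_inv, norm_norm, inv_mul_cancel₀ (norm_ne_zero_iff.2 ha)]
  · intro x hx h
    apply hw0 x hx
    rw [inner_smul_left] at h
    simpa [ha] using h


lemma contr_mem {n : ℕ} {R : ℝ} {L : EE n →L[ℝ] EE n} (hL : ‖L‖ ≤ 1) {x : EE n}
    (hx : x ∈ ball (0 : EE n) R) : L x ∈ ball (0 : EE n) R := by
  rw [mem_ball_zero_iff] at *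
  calc ‖L x‖ ≤ ‖L‖ * ‖x‖ := L.le_opNorm x
    _ ≤ 1 * ‖x‖ := by gcongr
    _ < R := by rwa [one_mul]

lemma C1b.contFd {n : ℕ} {R : ℝ} {u : EE n → ℝ} (hu : C1b R u) :
    ContinuousOn (fderiv ℝ u) (ball 0 R) :=
  hu.cd.continuousOn_fderiv_of_isOpen isOpen_ball (by norm_num)

lemma C1b.hasFd {n : ℕ} {R : ℝ} {u : EE n → ℝ} (hu : C1b R u) {x : EE n}
    (hx : x ∈ ball (0 : EE n) R) : HasFDerivAt u (fderiv ℝ u x) x :=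
  (hu.hasGrad hx).differentiableAt.hasFDerivAt

lemma C1b.mk' {n : ℕ} {R : ℝ} {u : EE n → ℝ} {u' : EE n → EE n →L[ℝ] ℝ}
    (h : ∀ x ∈ ball (0 : EE n) R, HasFDerivAt u (u' x) x) (hc : ContinuousOn u' (ball 0 R))
    (C D : ℝ) (hC : ∀ x ∈ ball (0 : EE n) R, |u x| ≤ C) (hD : ∀ x ∈ ball (0 : EE n) R, ‖u' x‖ ≤ D) :
    C1b R u := by
  refine ⟨?_, max 0 (max C D), le_max_left _ _, fun x hx => ⟨?_, ?_⟩⟩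
  · have : (1 : WithTop ℕ∞) = 0 + 1 := by norm_num
    rw [this, contDiffOn_succ_iff_fderiv_of_isOpen isOpen_ball]
    refine ⟨fun x hx => (h x hx).differentiableAt.differentiableWithinAt, by simp, ?_⟩
    rw [contDiffOn_zero]
    exact hc.congr fun x hx => (h x hx).fderiv
  · exact (hC x hx).trans ((le_max_left _ _).trans (le_max_right _ _))
  · rw [norm_gradient, (h x hx).fderiv]
    exact (hD x hx).trans ((le_max_right _ _).trans (le_max_right _ _))

lemma C1b.comp {n : ℕ} {R : ℝ} {u : EE n → ℝ} (hu : C1b R u) {L : EE n →L[ℝ] EE n} (hL : ‖L‖ ≤ 1) :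
    C1b R (fun x => u (L x)) ∧ ∀ x ∈ ball (0 : EE n) R,
      fderiv ℝ (fun x => u (L x)) x = (fderiv ℝ u (L x)).comp L := by
  have h : ∀ x ∈ ball (0 : EE n) R, HasFDerivAt (fun x => u (L x)) ((fderiv ℝ u (L x)).comp L) x :=
    fun x hx => (hu.hasFd (contr_mem hL hx)).comp x L.hasFDerivAt
  obtain ⟨C, hC, hb⟩ := hu.bd
  refine ⟨C1b.mk' h ?_ C C (fun x hx => (hb _ (contr_mem hL hx)).1) ?_, fun x hx => (h x hx).fderiv⟩
  · exact (hu.contFd.comp L.continuous.continuousOn fun x hx => contr_mem hL hx).clm_comp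
      continuousOn_const
  · intro x hx
    refine (ContinuousLinearMap.opNorm_comp_le _ _).trans ?_
    rw [← norm_gradient]
    calc _ ≤ C * 1 := by gcongr; exact (hb _ (contr_mem hL hx)).2
      _ = C := mul_one C

section avg
variable {T : Type*} [TopologicalSpace T] [SecondCountableTopology T] [MeasurableSpace T]
  [BorelSpace T] {n : ℕ} {R : ℝ}

/-- Weighted average of a function along a family of linear maps. -/
def avg (ν : Measure T) (ω : T → ℝ) (L : T → EE n →L[ℝ] EE n) (u : EE n → ℝ) (x : EE n) : ℝ :=
  ∫ t, ω t * u (L t x) ∂ν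

lemma joint_cont {L : T → EE n →L[ℝ] EE n} (hLc : Continuous L) (hL : ∀ t, ‖L t‖ ≤ 1)
    {Y : Type*} [TopologicalSpace Y] {f : EE n → Y} (hf : ContinuousOn f (ball 0 R)) :
    ContinuousOn (fun p : T × EE n => f (L p.1 p.2)) (univ ×ˢ ball 0 R) := by
  refine hf.comp (Continuous.continuousOn ?_) fun p hp => contr_mem (hL p.1) hp.2
  exact (hLc.comp continuous_fst).clm_apply continuous_snd

lemma avg_C1b (ν : Measure T) [IsFiniteMeasure ν] {ω : T → ℝ} (hω : Continuous ω) {M : ℝ}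
    (hM : ∀ t, |ω t| ≤ M) {L : T → EE n →L[ℝ] EE n} (hLc : Continuous L) (hL : ∀ t, ‖L t‖ ≤ 1)
    {u : EE n → ℝ} (hu : C1b R u) :
    C1b R (avg ν ω L u) ∧ ∀ x ∈ ball (0 : EE n) R, ∀ y,
      fderiv ℝ (avg ν ω L u) x y = ∫ t, ω t * fderiv ℝ u (L t x) (L t y) ∂ν := by
  obtain ⟨C, hC, hb⟩ := hu.bd
  have hM0 : ∀ t : T, 0 ≤ M := fun t => (abs_nonneg _).trans (hM t)
  let F' : EE n → T → EE n →L[ℝ] ℝ := fun x t => ω t • (fderiv ℝ u (L t x)).comp (L t)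
  have hF'b : ∀ t, ∀ x ∈ ball (0 : EE n) R, ‖F' x t‖ ≤ M * C := by
    intro t x hx
    simp only [F']
    rw [norm_smul, Real.norm_eq_abs]
    have := hM0 t
    refine mul_le_mul (hM t) ?_ (norm_nonneg _) this
    refine (ContinuousLinearMap.opNorm_comp_le _ _).trans ?_
    rw [← norm_gradient]
    calc _ ≤ C * 1 := by gcongr; exacts [(hb _ (contr_mem (hL t) hx)).2, hL t]
      _ = C := mul_one C
  have hFb : ∀ t, ∀ x ∈ ball (0 : EE n) R, ‖ω t * u (L t x)‖ ≤ M * C := by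
    intro t x hx
    rw [norm_mul, Real.norm_eq_abs, Real.norm_eq_abs]
    have := hM0 t
    exact mul_le_mul (hM t) (hb _ (contr_mem (hL t) hx)).1 (abs_nonneg _) this
  have hLx : ∀ x : EE n, Continuous (fun t => L t x) := fun x => hLc.clm_apply continuous_const
  have hFc : ∀ x ∈ ball (0 : EE n) R, Continuous (fun t => ω t * u (L t x)) := fun x hx =>
    hω.mul (hu.cd.continuousOn.comp_continuous (hLx x) fun t => contr_mem (hL t) hx)
  have hF'c : ∀ x ∈ ball (0 : EE n) R, Continuous (F' x) := fun x hx =>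
    hω.smul ((hu.contFd.comp_continuous (hLx x) fun t => contr_mem (hL t) hx).clm_comp hLc)
  have hF'm : ∀ x ∈ ball (0 : EE n) R, AEStronglyMeasurable (F' x) ν := fun x hx =>
    (hF'c x hx).aestronglyMeasurable
  have hF'i : ∀ x ∈ ball (0 : EE n) R, Integrable (F' x) ν := fun x hx =>
    Integrable.of_bound (hF'm x hx) (M * C) (ae_of_all _ fun t => hF'b t x hx)
  have hd : ∀ x ∈ ball (0 : EE n) R, HasFDerivAt (avg ν ω L u) (∫ t, F' x t ∂ν) x := by
    intro x hx
    refine hasFDerivAt_integral_of_dominated_of_fderiv_le (bound := fun _ => M * C)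
      (isOpen_ball.mem_nhds hx) ?_ ?_ (hF'm x hx) (ae_of_all _ fun t y hy => hF'b t y hy)
      (integrable_const _) (ae_of_all _ fun t y hy => ?_)
    · filter_upwards [isOpen_ball.mem_nhds hx] with y hy
      exact (hFc y hy).aestronglyMeasurable
    · exact Integrable.of_bound (hFc x hx).aestronglyMeasurable (M * C)
        (ae_of_all _ fun t => hFb t x hx)
    · exact ((hu.hasFd (contr_mem (hL t) hy)).comp y (L t).hasFDerivAt).const_mul (ω t)
  refine ⟨C1b.mk' hd ?_ (M * C * ν.real univ) (M * C * ν.real univ) ?_ ?_, ?_⟩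
  · refine continuousOn_of_dominated (bound := fun _ => M * C) hF'm
      (fun x hx => ae_of_all _ fun t => hF'b t x hx) (integrable_const _) (ae_of_all _ fun t => ?_)
    exact ((hu.contFd.comp (L t).continuous.continuousOn
      fun x hx => contr_mem (hL t) hx).clm_comp continuousOn_const).const_smul (ω t)
  · intro x hx
    exact norm_integral_le_of_norm_le_const (ae_of_all _ fun t => hFb t x hx)
  · intro x hx
    exact norm_integral_le_of_norm_le_const (ae_of_all _ fun t => hF'b t x hx)
  · intro x hx y
    rw [(hd x hx).fderiv, ContinuousLinearMap.integral_apply (hF'i x hx)]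
    rfl

lemma avg_QF (ν : Measure T) [IsFiniteMeasure ν] {ω : T → ℝ} (hω : Continuous ω) {M : ℝ}
    (hM : ∀ t, |ω t| ≤ M) {L : T → EE n →L[ℝ] EE n} (hLc : Continuous L) (hL : ∀ t, ‖L t‖ ≤ 1)
    {u w : EE n → ℝ} (hu : C1b R u) (hw : C1b R w) (μ : ℝ) :
    QF μ R w (avg ν ω L u) = ∫ t, ω t * QF μ R w (fun x => u (L t x)) ∂ν ∧
      Integrable (fun t => ω t * QF μ R w (fun x => u (L t x))) ν := by
  obtain ⟨C, hC, hb⟩ := hu.bd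
  obtain ⟨D, hD, hb'⟩ := hw.bd
  have hM0 : ∀ t : T, 0 ≤ M := fun t => (abs_nonneg _).trans (hM t)
  obtain ⟨hA, hAd⟩ := avg_C1b ν hω hM hLc hL hu
  let f : T → EE n → ℝ := fun t x =>
    ω t * (fderiv ℝ u (L t x) (L t (gradient w x)) - μ * (w x * u (L t x)))
  have hfc : ContinuousOn (fun p : T × EE n => f p.1 p.2) (univ ×ˢ ball 0 R) := by
    have h1 := joint_cont (R := R) hLc hL hu.contFd
    have h2 := joint_cont (R := R) hLc hL hu.cd.continuousOn
    have h3 : ContinuousOn (fun p : T × EE n => gradient w p.2) (univ ×ˢ ball 0 R) :=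
      hw.contGrad.comp continuousOn_snd fun p hp => hp.2
    have h4 : ContinuousOn (fun p : T × EE n => w p.2) (univ ×ˢ ball 0 R) :=
      hw.cd.continuousOn.comp continuousOn_snd fun p hp => hp.2
    have h5 : ContinuousOn (fun p : T × EE n => L p.1) (univ ×ˢ ball 0 R) :=
      (hLc.comp continuous_fst).continuousOn
    exact ((hω.comp continuous_fst).continuousOn).mul
      ((h1.clm_apply (h5.clm_apply h3)).sub (continuousOn_const.mul (h4.mul h2)))
  have hterm : ∀ t, ∀ x ∈ ball (0 : EE n) R, |fderiv ℝ u (L t x) (L t (gradient w x))| ≤ C * D := by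
    intro t x hx
    refine ((fderiv ℝ u (L t x)).le_opNorm _).trans ?_
    rw [← norm_gradient]
    refine mul_le_mul (hb _ (contr_mem (hL t) hx)).2 ?_ (norm_nonneg _) hC
    calc _ ≤ ‖L t‖ * ‖gradient w x‖ := (L t).le_opNorm _
      _ ≤ 1 * D := by gcongr; exacts [hL t, (hb' x hx).2]
      _ = D := one_mul D
  have hterm2 : ∀ t, ∀ x ∈ ball (0 : EE n) R, |μ * (w x * u (L t x))| ≤ |μ| * (D * C) := by
    intro t x hx
    rw [abs_mul, abs_mul]
    gcongr
    exacts [(hb' x hx).1, (hb _ (contr_mem (hL t) hx)).1]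
  have hfb : ∀ t, ∀ x ∈ ball (0 : EE n) R, ‖f t x‖ ≤ M * (C * D + |μ| * (D * C)) := by
    intro t x hx
    have := hM0 t
    simp only [f]
    rw [norm_mul, Real.norm_eq_abs, Real.norm_eq_abs]
    refine mul_le_mul (hM t) ((abs_sub _ _).trans (add_le_add (hterm t x hx) (hterm2 t x hx)))
      (abs_nonneg _) this
  have hfi : Integrable (Function.uncurry f) (ν.prod (volume.restrict (ball (0 : EE n) R))) := by
    have e : ν.prod (volume.restrict (ball (0 : EE n) R))
        = (ν.prod volume).restrict (univ ×ˢ ball 0 R) := by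
      rw [← Measure.prod_restrict, Measure.restrict_univ]
    have : IsFiniteMeasure (volume.restrict (ball (0 : EE n) R)) :=
      ⟨by simpa using measure_ball_lt_top⟩
    have hms : MeasurableSet (univ ×ˢ ball (0 : EE n) R : Set (T × EE n)) :=
      MeasurableSet.univ.prod measurableSet_ball
    refine Integrable.of_bound ?_ (M * (C * D + |μ| * (D * C))) ?_
    · rw [e]
      exact hfc.aestronglyMeasurable hms
    · rw [e]
      filter_upwards [ae_restrict_mem hms] with p hp
      exact hfb p.1 p.2 hp.2
  have h1 : QF μ R w (avg ν ω L u) = ∫ x in ball (0 : EE n) R, ∫ t, f t x ∂ν := by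
    unfold QF
    refine setIntegral_congr_fun measurableSet_ball fun x hx => ?_
    have hLx : ∀ x : EE n, Continuous (fun t => L t x) := fun x => hLc.clm_apply continuous_const
    have i1 : Integrable (fun t => ω t * fderiv ℝ u (L t x) (L t (gradient w x))) ν := by
      refine Integrable.of_bound (C := M * (C * D)) (Continuous.aestronglyMeasurable ?_)
        (ae_of_all _ fun t => ?_)
      · exact hω.mul ((hu.contFd.comp_continuous (hLx x)
          fun t => contr_mem (hL t) hx).clm_apply (hLx _))
      · rw [norm_mul, Real.norm_eq_abs, Real.norm_eq_abs]
        exact mul_le_mul (hM t) (hterm t x hx) (abs_nonneg _) (hM0 t)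
    have i2 : Integrable (fun t => ω t * u (L t x)) ν := by
      refine Integrable.of_bound (C := M * C) (Continuous.aestronglyMeasurable ?_)
        (ae_of_all _ fun t => ?_)
      · exact hω.mul (hu.cd.continuousOn.comp_continuous (hLx x)
          fun t => contr_mem (hL t) hx)
      · rw [norm_mul, Real.norm_eq_abs, Real.norm_eq_abs]
        exact mul_le_mul (hM t) (hb _ (contr_mem (hL t) hx)).1 (abs_nonneg _) (hM0 t)
    rw [real_inner_comm, inner_gradient, hAd x hx]
    have e : ∀ t, f t x = ω t * fderiv ℝ u (L t x) (L t (gradient w x))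
        - (μ * w x) * (ω t * u (L t x)) := fun t => by simp only [f]; ring
    simp_rw [e]
    rw [integral_sub i1 (i2.const_mul _), integral_const_mul, avg]
    ring
  have h2 : ∀ t, ∫ x in ball (0 : EE n) R, f t x = ω t * QF μ R w (fun x => u (L t x)) := by
    intro t
    simp only [f]
    rw [integral_const_mul]
    congr 1
    unfold QF
    refine setIntegral_congr_fun measurableSet_ball fun x hx => ?_
    simp only
    rw [real_inner_comm (gradient (fun x => u (L t x)) x), inner_gradient,
      (hu.comp (hL t)).2 x hx]
    rfl
  constructor
  · rw [h1, ← integral_integral_swap hfi]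
    simp_rw [h2]
  · refine hfi.integral_prod_left.congr (ae_of_all _ fun t => ?_)
    exact h2 t

end avg


lemma QF_comm {n : ℕ} (μ R : ℝ) (u v : EE n → ℝ) : QF μ R u v = QF μ R v u := by
  unfold QF
  congr 1; ext x
  rw [real_inner_comm, mul_comm (u x)]

lemma QF_sub {n : ℕ} {μ R : ℝ} {u v : EE n → ℝ} (hu : C1b R u) (hv : C1b R v) :
    QF μ R (fun x => u x - v x) (fun x => u x - v x)
      = QF μ R u u - 2 * QF μ R u v + QF μ R v v := by
  have h := (hu.sub hv).2
  unfold QF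
  rw [← integral_const_mul, ← integral_sub (hu.integrable hu μ) ((hu.integrable hv μ).const_mul 2),
    ← integral_add (f := fun x => inner ℝ (gradient u x) (gradient u x) - μ * (u x * u x) -
        2 * (inner ℝ (gradient u x) (gradient v x) - μ * (u x * v x)))
      ((hu.integrable hu μ).sub ((hu.integrable hv μ).const_mul 2))
      (hv.integrable hv μ)]
  refine setIntegral_congr_fun measurableSet_ball fun x hx => ?_
  simp only
  rw [h x hx, inner_sub_left, inner_sub_right, inner_sub_right,
    real_inner_comm (gradient u x) (gradient v x)]
  ring

/-- A linear isometry as a continuous linear map. -/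
abbrev isoL {n : ℕ} (g : EE n ≃ₗᵢ[ℝ] EE n) : EE n →L[ℝ] EE n := (g : EE n →L[ℝ] EE n)

lemma isoL_norm {n : ℕ} (g : EE n ≃ₗᵢ[ℝ] EE n) : ‖isoL g‖ ≤ 1 :=
  ContinuousLinearMap.opNorm_le_bound _ zero_le_one fun x => by simp

lemma gradient_iso {n : ℕ} {R : ℝ} {u : EE n → ℝ} (hu : C1b R u) (g : EE n ≃ₗᵢ[ℝ] EE n) {x : EE n}
    (hx : x ∈ ball (0 : EE n) R) :
    gradient (fun x => u (g x)) x = g.symm (gradient u (g x)) := by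
  apply ext_inner_right ℝ
  intro y
  have h := (hu.comp (isoL_norm g)).2 x hx
  have h' : fderiv ℝ (fun x => u (g x)) x = (fderiv ℝ u (g x)).comp (isoL g) := h
  rw [inner_gradient, h']
  have : inner ℝ (g.symm (gradient u (g x))) y = inner ℝ (gradient u (g x)) (g y) := by
    rw [← g.inner_map_map]; simp
  rw [this, inner_gradient]
  rfl

lemma QF_iso {n : ℕ} {μ R : ℝ} {u v : EE n → ℝ} (hu : C1b R u) (hv : C1b R v)
    (g : EE n ≃ₗᵢ[ℝ] EE n) :
    QF μ R (fun x => u (g x)) (fun x => v (g x)) = QF μ R u v := by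
  unfold QF
  rw [← g.measurePreserving.setIntegral_preimage_emb g.toHomeomorph.measurableEmbedding
    (fun x => inner ℝ (gradient u x) (gradient v x) - μ * (u x * v x))]
  have : g ⁻¹' (ball 0 R) = ball 0 R := by
    ext x; simp
  rw [this]
  refine setIntegral_congr_fun measurableSet_ball fun x hx => ?_
  simp only
  rw [gradient_iso hu g hx, gradient_iso hv g hx, LinearIsometryEquiv.inner_map_map]

lemma refl_ineq {n : ℕ} {μ R : ℝ} (hodd : OddProp n μ R) {u : EE n → ℝ} (hu : C1b R u) (a : EE n) :
    QF μ R u (fun x => u ((ℝ ∙ a)ᗮ.reflection x)) ≤ QF μ R u u := by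
  set σ := (ℝ ∙ a)ᗮ.reflection with hσ
  by_cases ha : a = 0
  · have : ∀ x, σ x = x := by
      intro x
      apply Submodule.reflection_mem_subspace_eq_self
      simp [ha]
    simp [this]
  have hv : C1b R (fun x => u (σ x)) := (hu.comp (isoL_norm σ)).1
  have h := hodd a ha _ (hu.sub hv).1 (fun x hx h0 => by
    have : σ x = x := by
      apply Submodule.reflection_mem_subspace_eq_self
      rw [Submodule.mem_orthogonal_singleton_iff_inner_right]
      exact h0
    simp [this])
  rw [QF_sub hu hv, QF_iso hu hu σ] at h
  linarith

/-- Invariance under all isometries fixing the basis vectors with index at least `k`. -/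
def InvK {n : ℕ} (k : ℕ) (u : EE n → ℝ) : Prop :=
  ∀ g : EE n ≃ₗᵢ[ℝ] EE n, (∀ j : Fin n, k ≤ j.val → g (eb j) = eb j) → ∀ x, u (g x) = u x

lemma invK_zero {n : ℕ} (u : EE n → ℝ) : InvK 0 u := by
  intro g hg x
  have : g.toLinearEquiv.toLinearMap = LinearMap.id := by
    apply (EuclideanSpace.basisFun (Fin n) ℝ).toBasis.ext
    intro j
    simpa using hg j (Nat.zero_le _)
  have h2 : g x = x := congrArg (fun f => f x) this
  rw [h2]

lemma step_ineq {n : ℕ} {μ R : ℝ} (hodd : OddProp n μ R) {u : EE n → ℝ} (hu : C1b R u) {k : ℕ}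
    (hk : k < n) (hinv : InvK k u) (g : EE n ≃ₗᵢ[ℝ] EE n)
    (hg : ∀ j : Fin n, k + 1 ≤ j.val → g (eb j) = eb j) :
    QF μ R u (fun x => u (g x)) ≤ QF μ R u u := by
  let e : EE n := eb ⟨k, hk⟩
  let σ := (ℝ ∙ (e - g.symm e))ᗮ.reflection
  have h1 : σ e = g.symm e := Submodule.reflection_sub (by simp)
  have h2 : ∀ j : Fin n, k ≤ j.val → g (σ (eb j)) = eb j := by
    intro j hj
    rcases hj.eq_or_lt with h | h
    · have : eb j = e := by simp only [e]; congr 1; ext; exact h.symm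
      rw [this, h1]; simp
    · have hne : j ≠ ⟨k, hk⟩ := by rintro rfl; simp at h
      have : σ (eb j) = eb j := by
        apply Submodule.reflection_mem_subspace_eq_self
        rw [Submodule.mem_orthogonal_singleton_iff_inner_right, inner_sub_left]
        have e1 : inner ℝ (g.symm e) (eb j) = inner ℝ e (eb j) := by
          rw [← g.inner_map_map, hg j h]; simp
        rw [e1, sub_self]
      rw [this, hg j h]
  have h3 : (fun x => u (g x)) = fun x => u (σ x) := by
    ext x
    have := hinv (σ.trans g) h2 (σ x)
    rw [← this]
    simp [σ]
  rw [h3]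
  exact refl_ineq hodd hu _

/-- The group of unitary maps fixing the basis vectors with index at least `k`. -/
def Gk (n k : ℕ) : Subgroup (unitary (EE n →L[ℝ] EE n)) where
  carrier := {g | ∀ j : Fin n, k ≤ j.val → (g : EE n →L[ℝ] EE n) (eb j) = eb j}
  one_mem' := by intro j _; simp
  mul_mem' := by
    intro a b ha hb j hj
    have : ((a * b : unitary (EE n →L[ℝ] EE n)) : EE n →L[ℝ] EE n) (eb j)
      = (a : EE n →L[ℝ] EE n) ((b : EE n →L[ℝ] EE n) (eb j)) := rfl
    rw [this, hb j hj, ha j hj]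
  inv_mem' := by
    intro a ha j hj
    have : ((a⁻¹ * a : unitary (EE n →L[ℝ] EE n)) : EE n →L[ℝ] EE n) (eb j)
      = ((a⁻¹ : unitary (EE n →L[ℝ] EE n)) : EE n →L[ℝ] EE n) ((a : EE n →L[ℝ] EE n) (eb j)) := rfl
    rw [ha j hj] at this
    rw [← this]; simp

instance contStar (n : ℕ) : ContinuousStar (EE n →L[ℝ] EE n) :=
  ⟨(ContinuousLinearMap.adjoint (𝕜 := ℝ) (E := EE n) (F := EE n)).continuous⟩

instance unitary_compact (n : ℕ) : CompactSpace (unitary (EE n →L[ℝ] EE n)) := by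
  have : IsCompact ((unitary (EE n →L[ℝ] EE n) : Set (EE n →L[ℝ] EE n))) := by
    apply Metric.isCompact_of_isClosed_isBounded isClosed_unitary
    rw [isBounded_iff_forall_norm_le]
    refine ⟨1, fun g hg => ?_⟩
    refine ContinuousLinearMap.opNorm_le_bound _ zero_le_one fun x => ?_
    have := Unitary.norm_map (⟨g, hg⟩ : unitary (EE n →L[ℝ] EE n)) x
    simp at this
    rw [this, one_mul]
  exact isCompact_iff_compactSpace.1 this

instance Gk_compact (n k : ℕ) : CompactSpace (Gk n k) := by
  have : IsClosed ((Gk n k : Set (unitary (EE n →L[ℝ] EE n)))) := by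
    have : (Gk n k : Set (unitary (EE n →L[ℝ] EE n))) = ⋂ j : Fin n, ⋂ _ : k ≤ j.val,
        {g : unitary (EE n →L[ℝ] EE n) | (g : EE n →L[ℝ] EE n) (eb j) = eb j} := by
      ext g; simp [Gk]
    rw [this]
    refine isClosed_iInter fun j => isClosed_iInter fun _ => ?_
    exact isClosed_eq (by fun_prop) continuous_const
  exact isCompact_iff_compactSpace.1 this.isCompact

lemma symm_step {n : ℕ} {μ R : ℝ} (hodd : OddProp n μ R) {u : EE n → ℝ} (hu : C1b R u) {k : ℕ}
    (hk : k < n) (hinv : InvK k u) : ∃ v : EE n → ℝ, C1b R v ∧ InvK (k + 1) v ∧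
      QF μ R v v ≤ QF μ R u u ∧ ∫ x in ball (0 : EE n) R, v x = ∫ x in ball (0 : EE n) R, u x := by
  let G := Gk n (k + 1)
  let _ : MeasurableSpace G := borel G
  have : BorelSpace G := ⟨rfl⟩
  let ν : Measure G := Measure.haarMeasure ⊤
  have : IsProbabilityMeasure ν := ⟨by
    have := Measure.haarMeasure_self (G := G) (K₀ := ⊤)
    simpa using this⟩
  let L : G → EE n →L[ℝ] EE n := fun g => ((g⁻¹ : G) : unitary (EE n →L[ℝ] EE n))
  have hLc : Continuous L := 
    continuous_subtype_val.comp (continuous_subtype_val.comp continuous_inv)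
  let I : G → (EE n ≃ₗᵢ[ℝ] EE n) := fun g => Unitary.linearIsometryEquiv (g : unitary (EE n →L[ℝ] EE n))
  have hLI : ∀ g, L g = isoL (I g⁻¹) := fun g => rfl
  have hL : ∀ g, ‖L g‖ ≤ 1 := fun g => by rw [hLI]; exact isoL_norm _
  have hIfix : ∀ g, ∀ j : Fin n, k + 1 ≤ j.val → I g (eb j) = eb j := fun g j hj => g.2 j hj
  let v := avg ν (fun _ => 1) L u
  have hv := (avg_C1b ν (ω := fun _ => 1) continuous_const (M := 1) (by simp) hLc hL hu).1
  have hvinv : InvK (k + 1) v := by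
    intro g hg x
    let h0 : unitary (EE n →L[ℝ] EE n) := Unitary.linearIsometryEquiv.symm g
    let h : G := ⟨h0, hg⟩
    have e1 : ∀ t : G, L t (g x) = L (h⁻¹ * t) x := by
      intro t
      simp only [L, mul_inv_rev, inv_inv]
      rfl
    simp only [v, avg, e1]
    exact integral_mul_left_eq_self (fun t => 1 * u (L t x)) h⁻¹
  have hone : C1b R (fun _ : EE n => (1:ℝ)) := by
    refine C1b.mk' (u' := fun _ => 0) (fun x _ => hasFDerivAt_const _ _) continuousOn_const 1 0 ?_ ?_
    · simp
    · simp
  have hmean : ∀ f : EE n → ℝ, QF (-1) R (fun _ : EE n => (1:ℝ)) f = ∫ x in ball (0 : EE n) R, f x := by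
    intro f
    unfold QF
    congr 1; ext x
    simp
  refine ⟨v, hv, hvinv, ?_, ?_⟩
  · have a1 := (avg_QF ν (ω := fun _ => 1) continuous_const (M := 1) (by simp) hLc hL hu hv μ).1
    have a2 := avg_QF ν (ω := fun _ => 1) continuous_const (M := 1) (by simp) hLc hL hu hu μ
    have e1 : ∀ t, QF μ R v (fun x => u (L t x)) = QF μ R u v := by
      intro t
      have : QF μ R v (fun x => u (L t x))
          = QF μ R (fun x => v (I t⁻¹ x)) (fun x => u (I t⁻¹ x)) := by
        congr 1
        ext x
        exact (hvinv _ (hIfix _) x).symm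
      rw [this, QF_iso hv hu, QF_comm]
    have e2 : QF μ R v v = QF μ R u v := by
      have : QF μ R v v = ∫ t, 1 * QF μ R v (fun x => u (L t x)) ∂ν := a1
      rw [this]
      simp_rw [e1]
      simp
    rw [e2]
    have e3 : QF μ R u v = ∫ t, 1 * QF μ R u (fun x => u (L t x)) ∂ν := a2.1
    rw [e3]
    calc _ ≤ ∫ t, QF μ R u u ∂ν := by
          apply integral_mono a2.2 (integrable_const _)
          intro t
          simp only [one_mul]
          exact step_ineq hodd hu hk hinv (I t⁻¹) (hIfix _)
      _ = _ := by simp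
  · have a1 := (avg_QF ν (ω := fun _ => 1) continuous_const (M := 1) (by simp) hLc hL hu hone (-1)).1
    rw [← hmean, ← hmean, a1]
    have e1 : ∀ t, QF (-1) R (fun _ : EE n => (1:ℝ)) (fun x => u (L t x))
        = QF (-1) R (fun _ : EE n => (1:ℝ)) u := fun t => QF_iso hone hu (I t⁻¹)
    simp_rw [e1]
    simp

lemma symmetrize {n : ℕ} {μ R : ℝ} (hodd : OddProp n μ R) {u : EE n → ℝ} (hu : C1b R u) :
    ∀ k ≤ n, ∃ v : EE n → ℝ, C1b R v ∧ InvK k v ∧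
      QF μ R v v ≤ QF μ R u u ∧ ∫ x in ball (0 : EE n) R, v x = ∫ x in ball (0 : EE n) R, u x := by
  intro k
  induction k with
  | zero => exact fun _ => ⟨u, hu, invK_zero u, le_rfl, rfl⟩
  | succ k ih =>
    intro hk
    obtain ⟨v, h1, h2, h3, h4⟩ := ih (by omega)
    obtain ⟨w, g1, g2, g3, g4⟩ := symm_step hodd h1 hk h2
    exact ⟨w, g1, g2, g3.trans h3, g4.trans h4⟩


/-- Bounded continuous functions on the ball. -/
def BC {n : ℕ} (R : ℝ) (f : EE n → ℝ) : Prop :=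
  ContinuousOn f (ball 0 R) ∧ ∃ C, ∀ x ∈ ball (0 : EE n) R, |f x| ≤ C

lemma BC.int {n : ℕ} {R : ℝ} {f : EE n → ℝ} (hf : BC R f) : IntegrableOn f (ball 0 R) := by
  obtain ⟨C, hC⟩ := hf.2
  exact integrableOn_ball hf.1 hC

lemma BC.add {n : ℕ} {R : ℝ} {f g : EE n → ℝ} (hf : BC R f) (hg : BC R g) :
    BC R (fun x => f x + g x) := by
  obtain ⟨C, hC⟩ := hf.2
  obtain ⟨D, hD⟩ := hg.2
  exact ⟨hf.1.add hg.1, C + D, fun x hx => (abs_add_le _ _).trans (add_le_add (hC x hx) (hD x hx))⟩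

lemma BC.mul {n : ℕ} {R : ℝ} {f g : EE n → ℝ} (hf : BC R f) (hg : BC R g) :
    BC R (fun x => f x * g x) := by
  obtain ⟨C, hC⟩ := hf.2
  obtain ⟨D, hD⟩ := hg.2
  refine ⟨hf.1.mul hg.1, C * D, fun x hx => ?_⟩
  rw [abs_mul]
  exact mul_le_mul (hC x hx) (hD x hx) (abs_nonneg _) ((abs_nonneg _).trans (hC x hx))

lemma BC.const {n : ℕ} {R : ℝ} (c : ℝ) : BC R (fun _ : EE n => c) :=
  ⟨continuousOn_const, |c|, fun _ _ => le_rfl⟩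

lemma BC.normsq {n : ℕ} {R : ℝ} : BC R (fun x : EE n => ‖x‖ ^ 2) := by
  refine ⟨by fun_prop, R ^ 2, fun x hx => ?_⟩
  rw [mem_ball_zero_iff] at hx
  rw [abs_of_nonneg (by positivity)]
  exact pow_le_pow_left₀ (norm_nonneg _) hx.le 2

lemma C1b.bc {n : ℕ} {R : ℝ} {u : EE n → ℝ} (hu : C1b R u) : BC R u := by
  obtain ⟨C, _, h⟩ := hu.bd
  exact ⟨hu.cd.continuousOn, C, fun x hx => (h x hx).1⟩

lemma C1b.bcG {n : ℕ} {R : ℝ} {u v : EE n → ℝ} (hu : C1b R u) (hv : C1b R v) :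
    BC R (fun x => inner ℝ (gradient u x) (gradient v x)) := by
  obtain ⟨C, hC, h⟩ := hu.bd
  obtain ⟨D, hD, h'⟩ := hv.bd
  exact ⟨hu.contGrad.inner hv.contGrad, C * D, fun x hx => (abs_real_inner_le_norm _ _).trans
        (mul_le_mul (h x hx).2 (h' x hx).2 (norm_nonneg _) hC)⟩

lemma C1b.bcX {n : ℕ} {R : ℝ} {u : EE n → ℝ} (hu : C1b R u) :
    BC R (fun x => inner ℝ (gradient u x) x) := by
  obtain ⟨C, hC, h⟩ := hu.bd
  refine ⟨hu.contGrad.inner continuousOn_id, C * R, fun x hx => (abs_real_inner_le_norm _ _).trans ?_⟩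
  exact mul_le_mul (h x hx).2 (mem_ball_zero_iff.1 hx).le (norm_nonneg _) hC

lemma C1b.mul {n : ℕ} {R : ℝ} {u v : EE n → ℝ} (hu : C1b R u) (hv : C1b R v) :
    C1b R (fun x => u x * v x) ∧ ∀ x ∈ ball (0 : EE n) R,
      gradient (fun x => u x * v x) x = u x • gradient v x + v x • gradient u x := by
  have h : ∀ x ∈ ball (0 : EE n) R,
      gradient (fun x => u x * v x) x = u x • gradient v x + v x • gradient u x :=
    fun x hx => ((hu.hasGrad hx).mulR (hv.hasGrad hx)).gradient
  obtain ⟨C, hC, hb⟩ := hu.bd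
  obtain ⟨D, hD, hb'⟩ := hv.bd
  refine ⟨⟨hu.cd.mul hv.cd, C * D + D * C, by positivity, fun x hx => ⟨?_, ?_⟩⟩, h⟩
  · rw [abs_mul]
    have : |u x| * |v x| ≤ C * D := mul_le_mul (hb x hx).1 (hb' x hx).1 (abs_nonneg _) hC
    have : 0 ≤ D * C := by positivity
    linarith
  · rw [h x hx]
    refine (norm_add_le _ _).trans (add_le_add ?_ ?_)
    · rw [norm_smul]
      exact mul_le_mul (hb x hx).1 (hb' x hx).2 (norm_nonneg _) hC
    · rw [norm_smul]
      exact mul_le_mul (hb' x hx).1 (hb x hx).2 (norm_nonneg _) hD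

lemma C1b.const {n : ℕ} {R : ℝ} (c : ℝ) : C1b R (fun _ : EE n => c) :=
  C1b.mk' (u' := fun _ => 0) (fun x _ => hasFDerivAt_const _ _) continuousOn_const |c| 0
    (by simp) (by simp)

lemma C1b.lin {n : ℕ} {R : ℝ} (a : EE n) : C1b R (fun x : EE n => inner ℝ a x) := by
  refine ⟨(contDiff_const.inner ℝ contDiff_id).contDiffOn, ‖a‖ * (|R| + 1), by positivity,
    fun x hx => ⟨?_, ?_⟩⟩
  · refine (abs_real_inner_le_norm _ _).trans ?_
    gcongr
    have := mem_ball_zero_iff.1 hx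
    linarith [le_abs_self R]
  · rw [(hasGradientAt_inner a x).gradient]
    have := norm_nonneg a
    nlinarith [abs_nonneg R]

lemma dvg_neg {n : ℕ} (W : EE n → EE n) (x : EE n) : dvg (fun y => - W y) x = - dvg W x := by
  unfold dvg
  rw [fderiv_fun_neg]
  simp

lemma div_ball_le {n : ℕ} {R : ℝ} (hR : 0 < R) {W : EE n → EE n} (hW : ContDiffOn ℝ 1 W (ball 0 R))
    (hIntg : IntegrableOn (dvg W) (ball 0 R)) {C : ℝ}
    (hC : ∀ x ∈ ball (0 : EE n) R, |inner ℝ x (W x)| ≤ C * (R - ‖x‖)) :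
    0 ≤ ∫ x in ball (0 : EE n) R, dvg W x := by
  have hset : {x : EE n | 0 < R ^ 2 - ‖x‖ ^ 2} = ball 0 R := by
    ext x
    rw [Set.mem_ofPred_eq, mem_ball_zero_iff, sub_pos, sq_lt_sq₀ (norm_nonneg _) hR.le]
  have hC0 : 0 ≤ C := by
    have := hC 0 (mem_ball_self hR)
    simp at this
    nlinarith
  have hgr : ∀ x : EE n, gradient (fun x : EE n => R ^ 2 - ‖x‖ ^ 2) x = (-2:ℝ) • x := by
    intro x
    have := (hasGradientAt_normsq x).comp_deriv (g := fun s => R ^ 2 - s)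
      ((hasDerivAt_id _).const_sub _)
    rw [this.gradient, smul_smul]; norm_num
  have key := div_lemma (fun x : EE n => R ^ 2 - ‖x‖ ^ 2)
    (contDiff_const.sub (contDiff_norm_sq ℝ)) (by rw [hset]; exact isBounded_ball) W
    (by rw [hset]; exact hW) (dvg W) (by rw [hset]; exact hIntg) (fun x _ => le_rfl) (2 * C / R)
    (by positivity) (fun x hx => by
      have hx' : x ∈ ball (0 : EE n) R := by rw [← hset]; exact hx
      have h1 := hC x hx'
      rw [mem_ball_zero_iff] at hx'
      rw [hgr, inner_smul_left]
      simp only [map_neg, conj_trivial]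
      have h2 := neg_abs_le (inner ℝ x (W x))
      have h3 : C * (R - ‖x‖) ≤ C / R * (R ^ 2 - ‖x‖ ^ 2) := by
        have : C / R * (R ^ 2 - ‖x‖ ^ 2) - C * (R - ‖x‖) = C / R * ((R - ‖x‖) * ‖x‖) := by
          field_simp; ring
        have h4 : 0 ≤ C / R * ((R - ‖x‖) * ‖x‖) := by
          have : 0 ≤ R - ‖x‖ := by linarith
          positivity
        linarith
      calc -2 * inner ℝ x (W x) ≤ 2 * (C / R * (R ^ 2 - ‖x‖ ^ 2)) := by linarith
        _ = _ := by ring)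
  rwa [hset] at key

/-- Divergence theorem on the ball for vector fields with vanishing normal component. -/
lemma divBall {n : ℕ} {R : ℝ} (hR : 0 < R) {W : EE n → EE n} (hW : ContDiffOn ℝ 1 W (ball 0 R))
    (hIntg : IntegrableOn (dvg W) (ball 0 R)) {C : ℝ}
    (hC : ∀ x ∈ ball (0 : EE n) R, |inner ℝ x (W x)| ≤ C * (R - ‖x‖)) :
    ∫ x in ball (0 : EE n) R, dvg W x = 0 := by
  have h1 := div_ball_le hR hW hIntg hC
  have e : dvg (fun y => - W y) = fun x => - dvg W x := funext fun x => dvg_neg W x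
  have h2 := div_ball_le hR (W := fun y => - W y) hW.neg (by rw [e]; exact hIntg.neg) (C := C)
    (by simpa using hC)
  rw [e, integral_neg] at h2
  linarith

lemma div_ball_smul {n : ℕ} {R : ℝ} (hR : 0 < R) {f : EE n → ℝ} (hf : C1b R f) {K : ℝ}
    (hK : ∀ x ∈ ball (0 : EE n) R, |f x| ≤ K * (R - ‖x‖)) :
    ∫ x in ball (0 : EE n) R, (n * f x + inner ℝ (gradient f x) x) = 0 := by
  have hd : ∀ x ∈ ball (0 : EE n) R,
      dvg (fun y => f y • y) x = n * f x + inner ℝ (gradient f x) x := by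
    intro x hx
    rw [dvg_smul f (fun y => y) x (hf.hasGrad hx) differentiableAt_id, dvg_id, mul_comm]
  have hK0 : 0 ≤ K := by
    have := (abs_nonneg _).trans (hK 0 (mem_ball_self hR))
    simp at this
    nlinarith
  rw [← divBall hR (W := fun y => f y • y) (hf.cd.smul contDiffOn_id) ?_ (C := R ^ 2 * K) ?_]
  · exact (setIntegral_congr_fun measurableSet_ball hd).symm
  · exact (((BC.const _).mul hf.bc).add hf.bcX).int.congr_fun (fun x hx => (hd x hx).symm)
      measurableSet_ball
  · intro x hx
    have h1 := mem_ball_zero_iff.1 hx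
    rw [inner_smul_right, real_inner_self_eq_norm_sq, abs_mul, abs_of_nonneg (sq_nonneg ‖x‖)]
    calc |f x| * ‖x‖ ^ 2 ≤ (K * (R - ‖x‖)) * R ^ 2 := by
          have := hK x hx
          have h2 : 0 ≤ R - ‖x‖ := by linarith
          gcongr
      _ = _ := by ring


/-- Dilation maps. -/
def dil (n : ℕ) (t : unitInterval) : EE n →L[ℝ] EE n := (t : ℝ) • ContinuousLinearMap.id ℝ (EE n)

lemma dil_apply {n : ℕ} (t : unitInterval) (x : EE n) : dil n t x = (t : ℝ) • x := rfl

lemma dil_cont (n : ℕ) : Continuous (dil n) :=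
  continuous_subtype_val.smul continuous_const

lemma dil_norm (n : ℕ) (t : unitInterval) : ‖dil n t‖ ≤ 1 := by
  refine ContinuousLinearMap.opNorm_le_bound _ zero_le_one fun x => ?_
  rw [dil_apply, norm_smul, Real.norm_eq_abs, abs_of_nonneg t.2.1]
  gcongr
  exact t.2.2

/-- Radial potential. -/
def radG {n : ℕ} (v : EE n → ℝ) : EE n → ℝ :=
  avg (volume : Measure unitInterval) (fun t => (t : ℝ) ^ (n - 1)) (dil n) v

lemma wcont (n : ℕ) : Continuous (fun t : unitInterval => (t : ℝ) ^ (n - 1)) := by fun_prop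

lemma wbd (n : ℕ) (t : unitInterval) : |(t : ℝ) ^ (n - 1)| ≤ 1 := by
  rw [abs_of_nonneg (pow_nonneg t.2.1 _)]
  exact pow_le_one₀ t.2.1 t.2.2

lemma radG_C1b {n : ℕ} {R : ℝ} {v : EE n → ℝ} (hv : C1b R v) : C1b R (radG v) :=
  (avg_C1b _ (wcont n) (wbd n) (dil_cont n) (dil_norm n) hv).1

lemma radG_inv {n : ℕ} {v : EE n → ℝ} (hv : ∀ g : EE n ≃ₗᵢ[ℝ] EE n, ∀ x, v (g x) = v x)
    (g : EE n ≃ₗᵢ[ℝ] EE n) (x : EE n) : radG v (g x) = radG v x := by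
  unfold radG avg
  congr 1; ext t
  rw [dil_apply, dil_apply, ← map_smul, hv]

lemma radG_euler {n : ℕ} (hn : 1 ≤ n) {R : ℝ} {v : EE n → ℝ} (hv : C1b R v) {x : EE n}
    (hx : x ∈ ball (0 : EE n) R) : n * radG v x + inner ℝ (gradient (radG v) x) x = v x := by
  have h1 := (avg_C1b (volume : Measure unitInterval) (wcont n) (wbd n) (dil_cont n) (dil_norm n) hv).2 x hx x
  have h1' : fderiv ℝ (radG v) x x = _ := h1
  rw [inner_gradient, h1']
  have hmem : ∀ t ∈ Icc (0:ℝ) 1, t • x ∈ ball (0 : EE n) R := by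
    intro t ht
    have := contr_mem (dil_norm n ⟨t, ht⟩) hx
    rwa [dil_apply] at this
  have ct : Continuous (fun t : ℝ => t • x) := by fun_prop
  have c1 : ContinuousOn (fun t : ℝ => v (t • x)) (Icc 0 1) :=
    hv.cd.continuousOn.comp ct.continuousOn hmem
  have c2 : ContinuousOn (fun t : ℝ => fderiv ℝ v (t • x) x) (Icc 0 1) :=
    (hv.contFd.comp ct.continuousOn hmem).clm_apply continuousOn_const
  let p1 : ℝ → ℝ := fun t => t ^ (n - 1) * v (t • x)
  let p2 : ℝ → ℝ := fun t => t ^ (n - 1) * fderiv ℝ v (t • x) (t • x)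
  have hc1 : ContinuousOn p1 (Icc 0 1) := (by fun_prop : Continuous fun t : ℝ => t ^ (n - 1)).continuousOn.mul c1
  have hc2 : ContinuousOn p2 (Icc 0 1) :=
    (by fun_prop : Continuous fun t : ℝ => t ^ (n - 1)).continuousOn.mul
      ((hv.contFd.comp ct.continuousOn hmem).clm_apply ct.continuousOn)
  have e1 : radG v x = ∫ t in (0:ℝ)..1, p1 t := by
    rw [intervalIntegral.integral_of_le zero_le_one, ← integral_Icc_eq_integral_Ioc]
    exact integral_subtype measurableSet_Icc p1
  have e2 : (∫ t : unitInterval, (t : ℝ) ^ (n - 1) * fderiv ℝ v (dil n t x) (dil n t x))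
      = ∫ t in (0:ℝ)..1, p2 t := by
    rw [intervalIntegral.integral_of_le zero_le_one, ← integral_Icc_eq_integral_Ioc]
    exact integral_subtype measurableSet_Icc p2
  rw [e1, e2, ← intervalIntegral.integral_const_mul, ← intervalIntegral.integral_add]
  · have hder : ∀ t ∈ uIcc (0:ℝ) 1,
        HasDerivAt (fun t : ℝ => t ^ n * v (t • x)) (n * p1 t + p2 t) t := by
      intro t ht
      rw [uIcc_of_le zero_le_one] at ht
      have d1 : HasDerivAt (fun t : ℝ => t • x) x t := by
        simpa using (hasDerivAt_id t).smul_const x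
      have d2 : HasDerivAt (fun t : ℝ => v (t • x)) (fderiv ℝ v (t • x) x) t :=
        (hv.hasFd (hmem t ht)).comp_hasDerivAt t d1
      have d3 := (hasDerivAt_pow n t).mul d2
      have : n * p1 t + p2 t = n * t ^ (n - 1) * v (t • x) + t ^ n * fderiv ℝ v (t • x) x := by
        obtain ⟨m, rfl⟩ : ∃ m, n = m + 1 := ⟨n - 1, by omega⟩
        simp only [p1, p2, map_smul, smul_eq_mul, Nat.add_sub_cancel]
        ring
      rw [this]
      exact d3
    rw [intervalIntegral.integral_eq_sub_of_hasDerivAt hder]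
    · have : n ≠ 0 := by omega
      simp [this]
    · apply ContinuousOn.intervalIntegrable
      rw [uIcc_of_le zero_le_one]
      exact (continuousOn_const.mul hc1).add hc2
  · apply ContinuousOn.intervalIntegrable
    rw [uIcc_of_le zero_le_one]
    exact continuousOn_const.mul hc1
  · apply ContinuousOn.intervalIntegrable
    rw [uIcc_of_le zero_le_one]
    exact hc2

lemma radial_grad {n : ℕ} {R : ℝ} {G : EE n → ℝ} (hG : C1b R G)
    (hinv : ∀ g : EE n ≃ₗᵢ[ℝ] EE n, ∀ x, G (g x) = G x) {x : EE n} (hx : x ∈ ball (0 : EE n) R) :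
    ‖x‖ ^ 2 * inner ℝ (gradient G x) (gradient G x) = (inner ℝ (gradient G x) x) ^ 2 := by
  have h1 : ∀ y : EE n, inner ℝ y x = 0 → inner ℝ (gradient G x) y = 0 := by
    intro y hy
    let σ := (ℝ ∙ y)ᗮ.reflection
    have hσx : σ x = x := by
      apply Submodule.reflection_mem_subspace_eq_self
      rw [Submodule.mem_orthogonal_singleton_iff_inner_right]; exact hy
    have hσy : σ y = -y := Submodule.reflection_orthogonalComplement_singleton_eq_neg y
    have h := gradient_iso hG σ hx
    have e : (fun x => G (σ x)) = G := funext fun z => hinv σ z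
    rw [e, hσx] at h
    have : inner ℝ (gradient G x) y = - inner ℝ (gradient G x) y := by
      calc inner ℝ (gradient G x) y = inner ℝ (σ.symm (gradient G x)) y := by rw [← h]
        _ = inner ℝ (gradient G x) (σ y) := by rw [← σ.inner_map_map]; simp
        _ = _ := by rw [hσy, inner_neg_right]
    linarith
  have h2 := h1 (‖x‖ ^ 2 • gradient G x - inner ℝ (gradient G x) x • x) (by
    rw [inner_sub_left, inner_smul_left, inner_smul_left, real_inner_self_eq_norm_sq]
    simp only [conj_trivial]; ring)
  rw [inner_sub_right, inner_smul_right, inner_smul_right] at h2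
  linarith

lemma radial_move {n : ℕ} {G : EE n → ℝ}
    (hinv : ∀ g : EE n ≃ₗᵢ[ℝ] EE n, ∀ x, G (g x) = G x) (e : EE n) (he : ‖e‖ = 1) (x : EE n) :
    G x = G (‖x‖ • e) := by
  have : ‖x‖ = ‖‖x‖ • e‖ := by simp [norm_smul, he]
  have h := Submodule.reflection_sub this
  rw [← hinv (ℝ ∙ (x - ‖x‖ • e))ᗮ.reflection x, h]

lemma radial_limit {n : ℕ} (hn : 1 ≤ n) {R : ℝ} (hR : 0 < R) {G : EE n → ℝ} (hG : C1b R G)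
    (hinv : ∀ g : EE n ≃ₗᵢ[ℝ] EE n, ∀ x, G (g x) = G x) :
    ∃ γ K : ℝ, ∀ x ∈ ball (0 : EE n) R, |G x - γ| ≤ K * (R - ‖x‖) := by
  obtain ⟨C, hC, hb⟩ := hG.bd
  let e : EE n := eb ⟨0, hn⟩
  have he : ‖e‖ = 1 := by simp [e]
  have hmem : ∀ r ∈ Ico 0 R, r • e ∈ ball (0 : EE n) R := by
    intro r hr
    rw [mem_ball_zero_iff, norm_smul, he, mul_one, Real.norm_eq_abs, abs_of_nonneg hr.1]
    exact hr.2
  have hl : LipschitzOnWith C.toNNReal (fun r : ℝ => G (r • e)) (Ico 0 R) := by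
    apply LipschitzOnWith.of_dist_le_mul
    intro r hr s hs
    rw [Real.dist_eq, Real.dist_eq, Real.coe_toNNReal _ hC]
    refine (hG.lip hb (hmem r hr) (hmem s hs)).trans ?_
    rw [← sub_smul, norm_smul, he, mul_one, Real.norm_eq_abs]
  obtain ⟨g, hg, hgeq⟩ := hl.extend_real
  refine ⟨g R, C, fun x hx => ?_⟩
  rw [mem_ball_zero_iff] at hx
  have h1 : G x = g ‖x‖ := by
    rw [radial_move hinv e he x]
    exact hgeq ⟨norm_nonneg _, hx⟩
  rw [h1]
  have := hg.dist_le_mul ‖x‖ R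
  rw [Real.dist_eq, Real.dist_eq, Real.coe_toNNReal _ hC, abs_sub_comm ‖x‖, abs_of_nonneg (a := R - ‖x‖) (by linarith)] at this
  exact this

lemma radG_bdry {n : ℕ} (hn : 1 ≤ n) {R : ℝ} (hR : 0 < R) {v : EE n → ℝ} (hv : C1b R v)
    (hinv : ∀ g : EE n ≃ₗᵢ[ℝ] EE n, ∀ x, v (g x) = v x)
    (hmean : ∫ x in ball (0 : EE n) R, v x = 0) :
    ∃ K : ℝ, ∀ x ∈ ball (0 : EE n) R, |radG v x| ≤ K * (R - ‖x‖) := by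
  have hG := radG_C1b hv
  obtain ⟨γ, K, hK⟩ := radial_limit hn hR hG (radG_inv hinv)
  have hs := hG.sub (C1b.const (n := n) (R := R) γ)
  have h := div_ball_smul hR hs.1 hK
  have e : ∀ x ∈ ball (0 : EE n) R, n * (radG v x - γ)
      + inner ℝ (gradient (fun x => radG v x - γ) x) x = v x - n * γ := by
    intro x hx
    have h0 : gradient (fun _ : EE n => γ) x = 0 := by simp [gradient]
    rw [hs.2 x hx, h0, sub_zero, ← radG_euler hn hv hx]
    ring
  rw [setIntegral_congr_fun measurableSet_ball e, integral_sub hv.bc.int (BC.const _).int, hmean,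
    setIntegral_const] at h
  have hvol : 0 < volume.real (ball (0 : EE n) R) :=
    ENNReal.toReal_pos (measure_ball_pos _ _ hR).ne' measure_ball_lt_top.ne
  have hn' : (0:ℝ) < n := by exact_mod_cast hn
  have hγ : γ = 0 := by
    simp only [smul_eq_mul] at h
    have : volume.real (ball (0 : EE n) R) * n * γ = 0 := by linarith
    simpa [hvol.ne', hn'.ne'] using this
  refine ⟨K, fun x hx => ?_⟩
  simpa [hγ] using hK x hx

lemma radial_poincare {n : ℕ} (hn : 1 ≤ n) {R μ : ℝ} (hR : 0 < R) (hμ : 0 < μ)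
    (hodd : OddProp n μ R) {v : EE n → ℝ} (hv : C1b R v)
    (hinv : ∀ g : EE n ≃ₗᵢ[ℝ] EE n, ∀ x, v (g x) = v x)
    (hmean : ∫ x in ball (0 : EE n) R, v x = 0) : 0 ≤ QF μ R v v := by
  obtain ⟨K, hK⟩ := radG_bdry hn hR hv hinv hmean
  set G := radG v with hGdef
  have hG : C1b R G := radG_C1b hv
  have hGinv : ∀ g : EE n ≃ₗᵢ[ℝ] EE n, ∀ x, G (g x) = G x := radG_inv hinv
  have euler : ∀ x ∈ ball (0 : EE n) R, n * G x + inner ℝ (gradient G x) x = v x :=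
    fun x hx => radG_euler hn hv hx
  have hprod : ∀ {f : EE n → ℝ}, C1b R f → ∃ K', ∀ x ∈ ball (0 : EE n) R,
      |f x * G x| ≤ K' * (R - ‖x‖) := by
    intro f hf
    obtain ⟨C, hC, hb⟩ := hf.bd
    refine ⟨C * K, fun x hx => ?_⟩
    rw [abs_mul, mul_assoc]
    exact mul_le_mul (hb x hx).1 (hK x hx) (abs_nonneg _) hC
  let p : EE n → ℝ := fun x => inner ℝ (gradient G x) x
  let r : EE n → ℝ := fun x => inner ℝ (gradient v x) x
  have bp : BC R p := hG.bcX
  have br : BC R r := hv.bcX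
  -- the square identity
  have i1 : ∫ x in ball (0 : EE n) R, (n * (G x * G x) + 2 * (G x * p x)) = 0 := by
    obtain ⟨K', hK'⟩ := hprod hG
    rw [← div_ball_smul hR (hG.mul hG).1 hK']
    refine setIntegral_congr_fun measurableSet_ball fun x hx => ?_
    rw [(hG.mul hG).2 x hx, inner_add_left, inner_smul_left]
    simp only [p, conj_trivial]
    ring
  have i2 : ∫ x in ball (0 : EE n) R, (v x * v x + G x * r x) = 0 := by
    obtain ⟨K', hK'⟩ := hprod hv
    rw [← div_ball_smul hR (hv.mul hG).1 hK']
    refine setIntegral_congr_fun measurableSet_ball fun x hx => ?_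
    rw [(hv.mul hG).2 x hx, inner_add_left, inner_smul_left, inner_smul_left]
    simp only [r, conj_trivial]
    linear_combination (-v x) * euler x hx
  rw [integral_add (hv.bc.mul hv.bc).int (hG.bc.mul br).int] at i2
  -- the coordinate functions
  have hV : ∀ i : Fin n, C1b R (fun x => inner ℝ (eb i) x * G x) ∧ ∀ x ∈ ball (0 : EE n) R,
      gradient (fun x => inner ℝ (eb i) x * G x) x
        = inner ℝ (eb i) x • gradient G x + G x • eb i := by
    intro i
    have h := (C1b.lin (R := R) (eb i)).mul hG
    refine ⟨h.1, fun x hx => ?_⟩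
    rw [h.2 x hx, (hasGradientAt_inner (eb i) x).gradient]
  have hQ : ∀ i : Fin n, 0 ≤ QF μ R (fun x => inner ℝ (eb i) x * G x)
      (fun x => inner ℝ (eb i) x * G x) := by
    intro i
    refine hodd (eb i) (by simp) _ (hV i).1 (fun x hx h => ?_)
    rw [h, zero_mul]
  have i3 : 0 ≤ ∫ x in ball (0 : EE n) R, ((v x * v x + (-((n:ℝ) - 1)) * (n * (G x * G x) + 2 * (G x * p x)))
      + (-μ) * (‖x‖ ^ 2 * (G x * G x))) := by
    have : 0 ≤ ∑ i : Fin n, QF μ R (fun x => inner ℝ (eb i) x * G x)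
      (fun x => inner ℝ (eb i) x * G x) := Finset.sum_nonneg fun i _ => hQ i
    unfold QF at this
    rw [← integral_finsetSum _ (fun i _ => (hV i).1.integrable (hV i).1 μ)] at this
    refine this.trans (le_of_eq ?_)
    refine setIntegral_congr_fun measurableSet_ball fun x hx => ?_
    have hi : ∀ i : Fin n, inner ℝ (eb i) x = x i := fun i => by
      simp [EuclideanSpace.inner_single_left]
    have s1 : ∑ i : Fin n, x i * x i = ‖x‖ ^ 2 := by
      rw [EuclideanSpace.real_norm_sq_eq]
      exact Finset.sum_congr rfl fun i _ => by ring
    have s2 : ∑ i : Fin n, x i * (gradient G x) i = p x := by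
      simp only [p]
      rw [PiLp.inner_apply]
      exact Finset.sum_congr rfl fun i _ => by simp
    have hterm : ∀ i : Fin n, inner ℝ (gradient (fun x => inner ℝ (eb i) x * G x) x)
        (gradient (fun x => inner ℝ (eb i) x * G x) x) - μ * (inner ℝ (eb i) x * G x * (inner ℝ (eb i) x * G x))
        = (x i * x i) * (inner ℝ (gradient G x) (gradient G x)) + (x i * (gradient G x) i) * (2 * G x)
          + G x * G x - (x i * x i) * (μ * (G x * G x)) := by
      intro i
      have hgi : inner ℝ (gradient G x) (eb i) = (gradient G x) i := by
        rw [EuclideanSpace.inner_single_right, one_mul, conj_trivial]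
      have hee : inner ℝ (eb i) (eb i) = (1:ℝ) := by simp
      rw [(hV i).2 x hx, inner_add_left, inner_add_right, inner_add_right]
      simp only [inner_smul_left, inner_smul_right, conj_trivial]
      rw [real_inner_comm (gradient G x) (eb i), hgi, hee, hi]
      ring
    rw [Finset.sum_congr rfl fun i _ => hterm i, Finset.sum_sub_distrib, Finset.sum_add_distrib,
      Finset.sum_add_distrib, ← Finset.sum_mul, ← Finset.sum_mul, ← Finset.sum_mul, ← Finset.sum_mul, s1, s2,
      radial_grad hG hGinv hx, ← euler x hx]
    simp only [Finset.sum_const, Finset.card_univ, Fintype.card_fin, nsmul_eq_mul, p]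
    ring
  have b1 : BC R (fun x : EE n => n * (G x * G x) + 2 * (G x * p x)) :=
    ((BC.const _).mul (hG.bc.mul hG.bc)).add ((BC.const _).mul (hG.bc.mul bp))
  have b2 : BC R (fun x : EE n => ‖x‖ ^ 2 * (G x * G x)) := BC.normsq.mul (hG.bc.mul hG.bc)
  rw [integral_add ((hv.bc.mul hv.bc).add ((BC.const _).mul b1)).int ((BC.const _).mul b2).int,
    integral_add (hv.bc.mul hv.bc).int ((BC.const _).mul b1).int, integral_const_mul,
    integral_const_mul, i1] at i3
  have i4 : 0 ≤ ∫ x in ball (0 : EE n) R, ((inner ℝ (gradient v x) (gradient v x) +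
      (2 * μ) * (G x * r x)) + μ ^ 2 * (‖x‖ ^ 2 * (G x * G x))) := by
    refine setIntegral_nonneg measurableSet_ball fun x hx => ?_
    have : 0 ≤ inner ℝ (gradient v x + (μ * G x) • x) (gradient v x + (μ * G x) • x) :=
      real_inner_self_nonneg
    rw [inner_add_left, inner_add_right, inner_add_right] at this
    simp only [inner_smul_left, inner_smul_right, conj_trivial, real_inner_self_eq_norm_sq x,
      real_inner_comm (gradient v x) x] at this
    simp only [r]
    linarith
  rw [integral_add ((hv.bcG hv).add ((BC.const _).mul (hG.bc.mul br))).int ((BC.const _).mul b2).int,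
    integral_add (hv.bcG hv).int ((BC.const _).mul (hG.bc.mul br)).int, integral_const_mul,
    integral_const_mul] at i4
  unfold QF
  rw [integral_sub (hv.bcG hv).int ((BC.const _).mul (hv.bc.mul hv.bc)).int, integral_const_mul]
  set a := ∫ x in ball (0 : EE n) R, v x * v x
  set b := ∫ x in ball (0 : EE n) R, ‖x‖ ^ 2 * (G x * G x)
  set c := ∫ x in ball (0 : EE n) R, inner ℝ (gradient v x) (gradient v x)
  set d := ∫ x in ball (0 : EE n) R, G x * r x
  nlinarith [mul_nonneg hμ.le i3]

/-- Poincare inequality. -/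
lemma poincare {n : ℕ} (hn : 1 ≤ n) {R μ : ℝ} (hR : 0 < R)
    (hμ : IsLeast {μ : ℝ | 0 < μ ∧ IsLapNeumannEigenvalueBall n R μ} μ)
    {u : EE n → ℝ} (hu : C1b R u)
    (hmean : ∫ x in ball (0 : EE n) R, u x = 0) : 0 ≤ QF μ R u u := by
  have hodd := oddProp_of_least hn hR hμ
  obtain ⟨v, h1, h2, h3, h4⟩ := symmetrize hodd hu n le_rfl
  refine (radial_poincare hn hR hμ.1.1 hodd h1 (fun g => h2 g ?_) (h4.trans hmean)).trans h3
  intro j hj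
  omega


lemma smooth_fdw {n : ℕ} {R : ℝ} (hR : 0 < R) {v : EE n → ℝ}
    (hv : ContDiffOn ℝ (⊤ : ℕ∞) v (closedBall 0 R)) :
    ContDiffOn ℝ (⊤ : ℕ∞) (fderivWithin ℝ v (closedBall 0 R)) (closedBall 0 R) :=
  hv.fderivWithin (uniqueDiff_cb hR) (by rfl)

lemma smooth_lap {n : ℕ} {R : ℝ} (hR : 0 < R) {v : EE n → ℝ}
    (hv : ContDiffOn ℝ (⊤ : ℕ∞) v (closedBall 0 R)) :
    ContDiffOn ℝ (⊤ : ℕ∞) (lapWithin (closedBall 0 R) v) (closedBall 0 R) := by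
  unfold lapWithin
  refine ContDiffOn.sum fun i _ => ?_
  have h1 : ContDiffOn ℝ (⊤ : ℕ∞)
      (fun y => fderivWithin ℝ v (closedBall 0 R) y (EuclideanSpace.single i 1)) (closedBall 0 R) :=
    (smooth_fdw hR hv).clm_apply contDiffOn_const
  exact (smooth_fdw hR h1).clm_apply contDiffOn_const

lemma smooth_bc {n : ℕ} {R : ℝ} {v : EE n → ℝ}
    (hv : ContDiffOn ℝ (⊤ : ℕ∞) v (closedBall 0 R)) : BC R v := by
  obtain ⟨C, hC⟩ := (isCompact_closedBall (0 : EE n) R).exists_bound_of_continuousOn hv.continuousOn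
  exact ⟨hv.continuousOn.mono ball_subset_closedBall, C, fun x hx => hC x (ball_subset_closedBall hx)⟩

lemma smooth_grad {n : ℕ} {R : ℝ} (hR : 0 < R) {v : EE n → ℝ}
    (hv : ContDiffOn ℝ (⊤ : ℕ∞) v (closedBall 0 R)) :
    ContDiffOn ℝ 1 (gradient v) (ball 0 R) := by
  have h1 : ContDiffOn ℝ 1 (fderivWithin ℝ v (closedBall 0 R)) (ball 0 R) :=
    ((smooth_fdw hR hv).mono ball_subset_closedBall).of_le (by exact_mod_cast le_top)
  have h2 : ContDiffOn ℝ 1 (fderiv ℝ v) (ball 0 R) :=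
    h1.congr fun x hx => (fdw_eq v hx).symm
  exact (InnerProductSpace.toDual ℝ (EE n)).symm.toContinuousLinearEquiv.contDiff.comp_contDiffOn h2

lemma smooth_C1b {n : ℕ} {R : ℝ} (hR : 0 < R) {v : EE n → ℝ}
    (hv : ContDiffOn ℝ (⊤ : ℕ∞) v (closedBall 0 R)) : C1b R v := by
  obtain ⟨C, hC⟩ := (isCompact_closedBall (0 : EE n) R).exists_bound_of_continuousOn hv.continuousOn
  obtain ⟨D, hD⟩ := (isCompact_closedBall (0 : EE n) R).exists_bound_of_continuousOn
    (smooth_fdw hR hv).continuousOn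
  have hC0 : 0 ≤ C := (norm_nonneg _).trans (hC 0 (mem_closedBall_self hR.le))
  refine ⟨(hv.mono ball_subset_closedBall).of_le (by exact_mod_cast le_top), max C D,
    hC0.trans (le_max_left _ _), fun x hx => ⟨?_, ?_⟩⟩
  · exact (hC x (ball_subset_closedBall hx)).trans (le_max_left _ _)
  · rw [norm_gradient, ← fdw_eq v hx]
    exact (hD x (ball_subset_closedBall hx)).trans (le_max_right _ _)

lemma smooth_normal {n : ℕ} {R : ℝ} (hR : 0 < R) {v : EE n → ℝ}
    (hv : ContDiffOn ℝ (⊤ : ℕ∞) v (closedBall 0 R))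
    (hb : ∀ x : EE n, ‖x‖ = R → fderivWithin ℝ v (closedBall 0 R) x (‖x‖⁻¹ • x) = 0) :
    ∃ C, ∀ x ∈ ball (0 : EE n) R, |inner ℝ x (gradient v x)| ≤ C * (R - ‖x‖) := by
  let N : EE n → ℝ := fun x => fderivWithin ℝ v (closedBall 0 R) x x
  have hN : ContDiffOn ℝ (⊤ : ℕ∞) N (closedBall 0 R) := (smooth_fdw hR hv).clm_apply contDiffOn_id
  obtain ⟨D, hD⟩ := (isCompact_closedBall (0 : EE n) R).exists_bound_of_continuousOn
    (smooth_fdw hR hN).continuousOn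
  have hD0 : 0 ≤ D := (norm_nonneg _).trans (hD 0 (mem_closedBall_self hR.le))
  refine ⟨D, fun x hx => ?_⟩
  have hxR := mem_ball_zero_iff.1 hx
  have e : inner ℝ x (gradient v x) = N x := by
    rw [real_inner_comm, inner_gradient, ← fdw_eq v hx]
  rw [e]
  by_cases h0 : x = 0
  · subst h0
    simp only [N, map_zero, abs_zero]
    exact mul_nonneg hD0 (by linarith)
  have hx0 : 0 < ‖x‖ := norm_pos_iff.2 h0
  let y : EE n := (R / ‖x‖) • x
  have hy : ‖y‖ = R := by
    simp only [y]
    rw [norm_smul, Real.norm_of_nonneg (by positivity)]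
    field_simp
  have hNy : N y = 0 := by
    have := hb y hy
    rw [map_smul, smul_eq_mul, hy] at this
    exact (mul_eq_zero.1 this).resolve_left (by positivity)
  have h1 := (convex_closedBall (0 : EE n) R).norm_image_sub_le_of_norm_fderivWithin_le
    (hN.differentiableOn (by simp)) hD (by rw [mem_closedBall_zero_iff, hy] : y ∈ closedBall (0 : EE n) R)
    (ball_subset_closedBall hx)
  rw [hNy, sub_zero] at h1
  have h2 : ‖x - y‖ = R - ‖x‖ := by
    have : x - y = (-((R - ‖x‖) / ‖x‖)) • x := by
      simp only [y]
      rw [← one_smul ℝ x, smul_smul, ← sub_smul]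
      simp only [norm_smul, norm_one, one_mul, smul_smul, mul_one]
      congr 1
      field_simp
      ring
    rw [this, norm_smul, norm_neg, Real.norm_of_nonneg (div_nonneg (by linarith) hx0.le)]
    field_simp
  rw [h2] at h1
  exact h1

lemma step {n : ℕ} (hn : 1 ≤ n) {R μ : ℝ} (hR : 0 < R)
    (hμ : IsLeast {μ : ℝ | 0 < μ ∧ IsLapNeumannEigenvalueBall n R μ} μ) {v : EE n → ℝ}
    (hv : ContDiffOn ℝ (⊤ : ℕ∞) v (closedBall 0 R))
    (hb : ∀ x : EE n, ‖x‖ = R → fderivWithin ℝ v (closedBall 0 R) x (‖x‖⁻¹ • x) = 0)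
    (hmean : ∫ x in ball (0 : EE n) R, v x = 0) :
    (∫ x in ball (0 : EE n) R, lapWithin (closedBall 0 R) v x = 0) ∧
    (μ ^ 2 * ∫ x in ball (0 : EE n) R, v x ^ 2) ≤
      ∫ x in ball (0 : EE n) R, (lapWithin (closedBall 0 R) v x) ^ 2 ∧
    ((∫ x in ball (0 : EE n) R, (lapWithin (closedBall 0 R) v x) ^ 2) ≤
      (μ ^ 2 * ∫ x in ball (0 : EE n) R, v x ^ 2) →
      ∀ x ∈ ball (0 : EE n) R, lapWithin (closedBall 0 R) v x = -μ * v x) := by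
  have hμ0 : 0 < μ := hμ.1.1
  set L := lapWithin (closedBall 0 R) v with hLdef
  have hL : BC R L := smooth_bc (smooth_lap hR hv)
  have hvb : BC R v := smooth_bc hv
  have hc := smooth_C1b hR hv
  have hg := smooth_grad hR hv
  have hgd : ∀ x ∈ ball (0 : EE n) R, DifferentiableAt ℝ (gradient v) x := fun x hx =>
    (hg.differentiableOn (by simp)).differentiableAt (isOpen_ball.mem_nhds hx)
  have hdv : ∀ x ∈ ball (0 : EE n) R, dvg (gradient v) x = L x := fun x hx =>
    (lap_eq_dvg hx (hgd x hx)).symm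
  obtain ⟨C, hC⟩ := smooth_normal hR hv hb
  have i1 : ∫ x in ball (0 : EE n) R, L x = 0 := by
    rw [← divBall hR hg (hL.int.congr_fun (fun x hx => (hdv x hx).symm) measurableSet_ball) hC]
    exact (setIntegral_congr_fun measurableSet_ball hdv).symm
  have hdv2 : ∀ x ∈ ball (0 : EE n) R, dvg (fun y => v y • gradient v y) x =
      v x * L x + inner ℝ (gradient v x) (gradient v x) := fun x hx => by
    rw [dvg_smul v (gradient v) x (hc.hasGrad hx) (hgd x hx), hdv x hx]
  have i2 : ∫ x in ball (0 : EE n) R, (v x * L x + inner ℝ (gradient v x) (gradient v x)) = 0 := by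
    obtain ⟨M, hM⟩ := hvb.2
    rw [← divBall hR (W := fun y => v y • gradient v y) (hc.cd.smul hg)
      (((hvb.mul hL).add (hc.bcG hc)).int.congr_fun (fun x hx => (hdv2 x hx).symm)
        measurableSet_ball) (C := M * C) ?_]
    · exact (setIntegral_congr_fun measurableSet_ball hdv2).symm
    · intro x hx
      rw [inner_smul_right, abs_mul, mul_assoc]
      exact mul_le_mul (hM x hx) (hC x hx) (abs_nonneg _) ((abs_nonneg _).trans (hM x hx))
  rw [integral_add (hvb.mul hL).int (hc.bcG hc).int] at i2
  have hP := poincare hn hR hμ hc hmean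
  unfold QF at hP
  rw [integral_sub (hc.bcG hc).int ((BC.const _).mul (hvb.mul hvb)).int, integral_const_mul] at hP
  have bS : BC R (fun x => L x + μ * v x) := hL.add ((BC.const _).mul hvb)
  have hexp : ∫ x in ball (0 : EE n) R, (L x + μ * v x) * (L x + μ * v x) =
      (∫ x in ball (0 : EE n) R, L x * L x) + 2 * μ * (∫ x in ball (0 : EE n) R, v x * L x)
        + μ ^ 2 * ∫ x in ball (0 : EE n) R, v x * v x := by
    rw [← integral_const_mul, ← integral_const_mul,
      ← integral_add (hL.mul hL).int ((BC.const _).mul (hvb.mul hL)).int,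
      ← integral_add ((hL.mul hL).add ((BC.const _).mul (hvb.mul hL))).int
        ((BC.const _).mul (hvb.mul hvb)).int]
    congr 1
    ext x
    ring
  have hS0 : 0 ≤ ∫ x in ball (0 : EE n) R, (L x + μ * v x) * (L x + μ * v x) :=
    integral_nonneg fun x => mul_self_nonneg _
  simp only [pow_two (L _), pow_two (v _)]
  refine ⟨i1, by nlinarith, fun hle => ?_⟩
  have hS : ∫ x in ball (0 : EE n) R, (L x + μ * v x) * (L x + μ * v x) = 0 :=
    le_antisymm (by nlinarith) hS0
  rw [integral_eq_zero_iff_of_nonneg (fun x => mul_self_nonneg _) (bS.mul bS).int] at hS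
  have hS' := Measure.eqOn_open_of_ae_eq hS isOpen_ball (bS.mul bS).1 continuousOn_const
  intro x hx
  have := hS' hx
  have := mul_self_eq_zero.1 this
  linarith

lemma iter_smooth {n : ℕ} {R : ℝ} (hR : 0 < R) {u : EE n → ℝ}
    (hu : ContDiffOn ℝ (⊤ : ℕ∞) u (closedBall 0 R)) (j : ℕ) :
    ContDiffOn ℝ (⊤ : ℕ∞) ((lapWithin (closedBall 0 R))^[j] u) (closedBall 0 R) := by
  induction j with
  | zero => exact hu
  | succ j ih => rw [Function.iterate_succ_apply']; exact smooth_lap hR ih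

lemma lap_germ {n : ℕ} {R c : ℝ} {f g : EE n → ℝ} (hfg : ∀ x ∈ ball (0 : EE n) R, f x = c * g x) :
    ∀ x ∈ ball (0 : EE n) R, lapWithin (closedBall 0 R) f x = c * lapWithin (closedBall 0 R) g x := by
  intro x hx
  have h1 : ∀ y ∈ ball (0 : EE n) R, fderivWithin ℝ f (closedBall 0 R) y
      = c • fderivWithin ℝ g (closedBall 0 R) y := by
    intro y hy
    have : f =ᶠ[𝓝 y] c • g := by
      filter_upwards [isOpen_ball.mem_nhds hy] with z hz using hfg z hz
    rw [fdw_eq _ hy, fdw_eq _ hy, this.fderiv_eq, fderiv_const_smul_field]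
    rfl
  unfold lapWithin
  rw [Finset.mul_sum]
  refine Finset.sum_congr rfl fun i _ => ?_
  have : (fun y => fderivWithin ℝ f (closedBall 0 R) y (EuclideanSpace.single i 1)) =ᶠ[𝓝 x]
      c • (fun y => fderivWithin ℝ g (closedBall 0 R) y (EuclideanSpace.single i 1)) := by
    filter_upwards [isOpen_ball.mem_nhds hx] with z hz
    rw [h1 z hz]
    rfl
  rw [fdw_eq _ hx, fdw_eq _ hx, this.fderiv_eq, fderiv_const_smul_field]
  rfl

lemma chain {n : ℕ} (hn : 1 ≤ n) {R μ : ℝ} (hR : 0 < R)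
    (hμ : IsLeast {μ : ℝ | 0 < μ ∧ IsLapNeumannEigenvalueBall n R μ} μ) (m : ℕ) :
    ∀ {u : EE n → ℝ}, ContDiffOn ℝ (⊤ : ℕ∞) u (closedBall 0 R) →
    (∫ x in ball (0 : EE n) R, u x = 0) →
    (∀ j < m, ∀ x : EE n, ‖x‖ = R →
      fderivWithin ℝ ((lapWithin (closedBall 0 R))^[j] u) (closedBall 0 R) x (‖x‖⁻¹ • x) = 0) →
    (μ ^ (2 * m) * ∫ x in ball (0 : EE n) R, u x ^ 2) ≤
      ∫ x in ball (0 : EE n) R, ((lapWithin (closedBall 0 R))^[m] u x) ^ 2 := by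
  induction m with
  | zero => intro u _ _ _; simp
  | succ m ih =>
    intro u hu hmean hb
    have hs := step hn hR hμ hu (hb 0 (Nat.succ_pos m)) hmean
    have h1 := ih (smooth_lap hR hu) hs.1 (fun j hj => hb (j + 1) (by omega))
    have h2 := mul_le_mul_of_nonneg_left hs.2.1 (pow_nonneg hμ.1.1.le (2 * m))
    calc _ = μ ^ (2 * m) * (μ ^ 2 * ∫ x in ball (0 : EE n) R, u x ^ 2) := by ring
      _ ≤ _ := h2
      _ ≤ _ := h1

lemma final {n m : ℕ} (hn : 2 ≤ n) (hm : 1 ≤ m)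
    (R : ℝ) (hR : 0 < R) (μ₁ : ℝ)
    (hμ : IsLeast {μ : ℝ | 0 < μ ∧ IsLapNeumannEigenvalueBall n R μ} μ₁)
    (u : EE n → ℝ)
    (hu : ContDiffOn ℝ (⊤ : ℕ∞) u (closedBall 0 R))
    (hmean : (∫ x in ball (0 : EE n) R, u x) = 0)
    (hb : ∀ j < m, ∀ x : EE n, ‖x‖ = R →
      fderivWithin ℝ ((lapWithin (closedBall 0 R))^[j] u) (closedBall 0 R) x (‖x‖⁻¹ • x) = 0) :
    (∫ x in ball (0 : EE n) R, ((lapWithin (closedBall 0 R))^[m] u x) ^ 2) ≥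
      μ₁ ^ (2 * m) * ∫ x in ball (0 : EE n) R, (u x) ^ 2 ∧
    ((∫ x in ball (0 : EE n) R, ((lapWithin (closedBall 0 R))^[m] u x) ^ 2) =
        μ₁ ^ (2 * m) * (∫ x in ball (0 : EE n) R, (u x) ^ 2) ↔
      ∀ x ∈ ball (0 : EE n) R, lapWithin (closedBall 0 R) u x = -μ₁ * u x) := by
  have hn1 : 1 ≤ n := by omega
  refine ⟨chain hn1 hR hμ m hu hmean hb, fun heq => ?_, fun hlap => ?_⟩
  · obtain ⟨k, rfl⟩ : ∃ k, m = k + 1 := ⟨m - 1, by omega⟩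
    have hs := step hn1 hR hμ hu (hb 0 (Nat.succ_pos k)) hmean
    have h1 := chain hn1 hR hμ k (smooth_lap hR hu) hs.1 (fun j hj => hb (j + 1) (by omega))
    apply hs.2.2
    have hp : 0 < μ₁ ^ (2 * k) := pow_pos hμ.1.1 _
    refine le_of_mul_le_mul_left ?_ hp
    refine (h1.trans heq.le).trans (le_of_eq ?_)
    ring
  · have key : ∀ j, ∀ x ∈ ball (0 : EE n) R,
        (lapWithin (closedBall 0 R))^[j] u x = (-μ₁) ^ j * u x := by
      intro j
      induction j with
      | zero => intro x _; simp
      | succ j ih =>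
        intro x hx
        rw [Function.iterate_succ_apply', lap_germ ih x hx, hlap x hx]
        ring
    rw [← integral_const_mul]
    refine setIntegral_congr_fun measurableSet_ball fun x hx => ?_
    change ((lapWithin (closedBall 0 R))^[m] u x) ^ 2 = μ₁ ^ (2 * m) * (u x) ^ 2
    rw [key m x hx, mul_pow, ← pow_mul, mul_comm m 2, Even.neg_pow (even_two_mul m)]

/-- **Rayleigh-quotient lower bound on a ball for `Δᵐ` with Neumann conditions.**
Let `n ≥ 2`, `m ≥ 1`, `R > 0`, and let `u` be smooth on the closed ball `B_R(0) ⊂ ℝⁿ` with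
`∫_{B_R(0)} u = 0` and `∂(Δʲu)/∂n = 0` on the boundary sphere for all `j = 0, 1, …, m−1`. Then
`∫ |Δᵐu|² ≥ μ₁(B_R(0))^(2m) ∫ |u|²`, with equality iff `Δu = −μ₁(B_R(0))·u` in the ball. -/
theorem polyharmonic_rayleigh_bound_ball {n m : ℕ} (hn : 2 ≤ n) (hm : 1 ≤ m)
    (R : ℝ) (hR : 0 < R) (μ₁ : ℝ)
    (hμ : IsLeast {μ : ℝ | 0 < μ ∧ IsLapNeumannEigenvalueBall n R μ} μ₁)
    (u : EuclideanSpace ℝ (Fin n) → ℝ)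
    (hu_smooth : ContDiffOn ℝ (⊤ : ℕ∞) u (closedBall 0 R))
    (hu_mean : (∫ x in ball (0 : EuclideanSpace ℝ (Fin n)) R, u x) = 0)
    (hu_bd : ∀ j < m, ∀ x : EuclideanSpace ℝ (Fin n), ‖x‖ = R →
      fderivWithin ℝ ((lapWithin (closedBall 0 R))^[j] u) (closedBall 0 R) x (‖x‖⁻¹ • x) = 0) :
    (∫ x in ball (0 : EuclideanSpace ℝ (Fin n)) R,
        ((lapWithin (closedBall 0 R))^[m] u x) ^ 2) ≥
      μ₁ ^ (2 * m) * ∫ x in ball (0 : EuclideanSpace ℝ (Fin n)) R, (u x) ^ 2 ∧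
    ((∫ x in ball (0 : EuclideanSpace ℝ (Fin n)) R,
        ((lapWithin (closedBall 0 R))^[m] u x) ^ 2) =
        μ₁ ^ (2 * m) * (∫ x in ball (0 : EuclideanSpace ℝ (Fin n)) R, (u x) ^ 2) ↔
      ∀ x ∈ ball (0 : EuclideanSpace ℝ (Fin n)) R,
        lapWithin (closedBall 0 R) u x = -μ₁ * u x) := by
  exact final hn hm R hR μ₁ hμ u hu_smooth hu_mean hu_bd
end
end

section
/- Let n ≥ 2, R > 0, μ > 0, k ≥ 1 an integer, and fix i ∈ {1, …, n}. Suppose g : (0, R] → ℝ is smooth and satisfies the ordinary differential equation g''(r) + (n−1)/r · g'(r) + ( μ − (n−1)/r² ) g(r) = 0 on (0, R]. Then the function u(x) = g(|x|)·xᵢ/|x| satisfies Δu = −μ·u on B_R(0) \ {0}, and more generally Δᵏu = (−μ)ᵏ·u on B_R(0) \ {0}. If in addition g'(R) = 0, then the outward radial derivative of Δᵏu vanishes on the sphere |x| = R for every integer k ≥ 0. -/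
open Set Metric

noncomputable section

lemma uniqueDiffOn_punctured {n : ℕ} {R : ℝ} (hR : 0 < R) :
    UniqueDiffOn ℝ (closedBall (0 : EuclideanSpace ℝ (Fin n)) R \ {0}) := by
  have h : UniqueDiffOn ℝ (closedBall (0 : EuclideanSpace ℝ (Fin n)) R) := by
    apply uniqueDiffOn_convex (convex_closedBall _ _)
    exact ⟨0, ball_subset_interior_closedBall (mem_ball_self hR)⟩
  exact h.inter isOpen_compl_singleton

lemma norm_mem_Ioc {n : ℕ} {R : ℝ} {x : EuclideanSpace ℝ (Fin n)}
    (hx : x ∈ closedBall (0 : EuclideanSpace ℝ (Fin n)) R \ {0}) : ‖x‖ ∈ Ioc 0 R := by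
  obtain ⟨h1, h2⟩ := hx
  exact ⟨norm_pos_iff.2 h2, by simpa using h1⟩

lemma hasFDerivWithinAt_radial {n : ℕ} {R : ℝ} {a : ℝ → ℝ} {a' : ℝ}
    {x : EuclideanSpace ℝ (Fin n)}
    (hx : x ∈ closedBall (0 : EuclideanSpace ℝ (Fin n)) R \ {0})
    (ha : HasDerivWithinAt a a' (Ioc 0 R) ‖x‖) :
    HasFDerivWithinAt (fun y : EuclideanSpace ℝ (Fin n) => a ‖y‖)
      ((a' / ‖x‖) • innerSL ℝ x) (closedBall 0 R \ {0}) x := by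
  have hx0 : 0 < ‖x‖ := (norm_mem_Ioc hx).1
  have h1 : HasFDerivAt (fun y : EuclideanSpace ℝ (Fin n) => ‖y‖)
      (‖x‖⁻¹ • innerSL ℝ x) x := by
    have h2 := (hasStrictFDerivAt_norm_sq x).hasFDerivAt.sqrt (by positivity)
    have e : (fun y : EuclideanSpace ℝ (Fin n) => √(‖y‖ ^ 2)) = fun y => ‖y‖ := by
      funext y; exact Real.sqrt_sq (norm_nonneg y)
    rw [e, Real.sqrt_sq (norm_nonneg x)] at h2
    refine h2.congr_fderiv ?_
    ext v
    simp
    field_simp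
  have h3 := ha.comp_hasFDerivWithinAt x h1.hasFDerivWithinAt (s := closedBall 0 R \ {0})
    (fun y hy => norm_mem_Ioc hy)
  refine h3.congr_fderiv ?_
  ext v
  simp
  field_simp

lemma hasFDerivWithinAt_coord {n : ℕ} (i : Fin n) (S : Set (EuclideanSpace ℝ (Fin n)))
    (x : EuclideanSpace ℝ (Fin n)) :
    HasFDerivWithinAt (fun y : EuclideanSpace ℝ (Fin n) => y i)
      (EuclideanSpace.proj i : EuclideanSpace ℝ (Fin n) →L[ℝ] ℝ) S x :=
  (EuclideanSpace.proj i : EuclideanSpace ℝ (Fin n) →L[ℝ] ℝ).hasFDerivWithinAt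

lemma hasFDerivWithinAt_u {n : ℕ} {R : ℝ} (i : Fin n) {g : ℝ → ℝ} {g' : ℝ}
    {x : EuclideanSpace ℝ (Fin n)}
    (hx : x ∈ closedBall (0 : EuclideanSpace ℝ (Fin n)) R \ {0})
    (hg : HasDerivWithinAt g g' (Ioc 0 R) ‖x‖) :
    HasFDerivWithinAt (fun y : EuclideanSpace ℝ (Fin n) => g ‖y‖ * (y i / ‖y‖))
      (((g' / ‖x‖ ^ 2 - g ‖x‖ / ‖x‖ ^ 3) * x i) • innerSL ℝ x
        + (g ‖x‖ / ‖x‖) • (EuclideanSpace.proj i : EuclideanSpace ℝ (Fin n) →L[ℝ] ℝ))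
      (closedBall 0 R \ {0}) x := by
  have hx0 : 0 < ‖x‖ := (norm_mem_Ioc hx).1
  have hh : HasDerivWithinAt (fun r => g r / r) _ (Ioc 0 R) ‖x‖ :=
    hg.div (hasDerivWithinAt_id _ _) hx0.ne'
  have h := (hasFDerivWithinAt_radial hx hh).mul (hasFDerivWithinAt_coord i _ x)
  have e : (fun y : EuclideanSpace ℝ (Fin n) => g ‖y‖ * (y i / ‖y‖))
      = (fun y : EuclideanSpace ℝ (Fin n) => g ‖y‖ / ‖y‖) * fun y => y i := by
    funext y; simp; ring
  rw [e]
  refine h.congr_fderiv ?_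
  ext v
  simp
  field_simp
  ring

lemma lap_u {n : ℕ} {R μ : ℝ} (hR : 0 < R) (i : Fin n) {g g1 g2 : ℝ → ℝ}
    (hg : ∀ r ∈ Ioc 0 R, HasDerivWithinAt g (g1 r) (Ioc 0 R) r)
    (hg1 : ∀ r ∈ Ioc 0 R, HasDerivWithinAt g1 (g2 r) (Ioc 0 R) r)
    (hODE : ∀ r ∈ Ioc (0 : ℝ) R,
      g2 r + ((n : ℝ) - 1) / r * g1 r + (μ - ((n : ℝ) - 1) / r ^ 2) * g r = 0)
    {x : EuclideanSpace ℝ (Fin n)}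
    (hx : x ∈ closedBall (0 : EuclideanSpace ℝ (Fin n)) R \ {0}) :
    lapWithin (closedBall 0 R \ {0}) (fun y => g ‖y‖ * (y i / ‖y‖)) x =
        -μ * (g ‖x‖ * (x i / ‖x‖)) := by
  have hr := norm_mem_Ioc hx
  have hx0 : 0 < ‖x‖ := hr.1
  have hU := uniqueDiffOn_punctured (n := n) hR
  unfold lapWithin
  have hb : HasDerivWithinAt (fun r => g1 r / r ^ 2 - g r / r ^ 3)
      (g2 ‖x‖ / ‖x‖ ^ 2 - 3 * g1 ‖x‖ / ‖x‖ ^ 3 + 3 * g ‖x‖ / ‖x‖ ^ 4) (Ioc 0 R) ‖x‖ := by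
    have h := ((hg1 _ hr).div ((hasDerivWithinAt_id ‖x‖ (Ioc 0 R)).pow 2) (pow_ne_zero _ hx0.ne')).sub
      ((hg _ hr).div ((hasDerivWithinAt_id ‖x‖ (Ioc 0 R)).pow 3) (pow_ne_zero _ hx0.ne'))
    refine h.congr_deriv ?_
    simp
    field_simp
    ring
  have hh : HasDerivWithinAt (fun r => g r / r)
      (g1 ‖x‖ / ‖x‖ - g ‖x‖ / ‖x‖ ^ 2) (Ioc 0 R) ‖x‖ := by
    have h := (hg _ hr).div (hasDerivWithinAt_id ‖x‖ (Ioc 0 R)) hx0.ne'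
    refine h.congr_deriv ?_
    simp
    field_simp
  have key : ∀ j : Fin n, fderivWithin ℝ
      (fun y => fderivWithin ℝ (fun y : EuclideanSpace ℝ (Fin n) => g ‖y‖ * (y i / ‖y‖))
        (closedBall 0 R \ {0}) y (EuclideanSpace.single j 1)) (closedBall 0 R \ {0}) x
        (EuclideanSpace.single j 1) =
      ((g2 ‖x‖ / ‖x‖ ^ 2 - 3 * g1 ‖x‖ / ‖x‖ ^ 3 + 3 * g ‖x‖ / ‖x‖ ^ 4) / ‖x‖ * x i) * (x j) ^ 2
      + (g1 ‖x‖ / ‖x‖ ^ 2 - g ‖x‖ / ‖x‖ ^ 3) * x i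
      + (if i = j then 2 * (g1 ‖x‖ / ‖x‖ ^ 2 - g ‖x‖ / ‖x‖ ^ 3) * x j else 0) := by
    intro j
    set δ : ℝ := if i = j then 1 else 0 with hδ
    have hc : ∀ y ∈ closedBall (0 : EuclideanSpace ℝ (Fin n)) R \ {0},
        fderivWithin ℝ (fun y : EuclideanSpace ℝ (Fin n) => g ‖y‖ * (y i / ‖y‖))
        (closedBall 0 R \ {0}) y (EuclideanSpace.single j 1) =
        (fun r => g1 r / r ^ 2 - g r / r ^ 3) ‖y‖ * (y i * y j) + (fun r => g r / r) ‖y‖ * δ := by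
      intro y hy
      rw [(hasFDerivWithinAt_u i hy (hg _ (norm_mem_Ioc hy))).fderivWithin (hU y hy)]
      simp [EuclideanSpace.inner_single_right, Pi.single_apply, hδ]
      ring
    rw [fderivWithin_congr hc (hc x hx)]
    have h := ((hasFDerivWithinAt_radial hx hb).mul
      ((hasFDerivWithinAt_coord i _ x).mul (hasFDerivWithinAt_coord j _ x))).add
      ((hasFDerivWithinAt_radial hx hh).mul_const δ)
    have h' := h.fderivWithin (hU x hx)
    refine (congrArg (fun L => L (EuclideanSpace.single j 1)) h').trans ?_
    by_cases hij : i = j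
    · subst hij
      simp [EuclideanSpace.inner_single_right, hδ]
      field_simp
      ring
    · simp [EuclideanSpace.inner_single_right, hδ, hij]
      field_simp
      ring
  rw [Finset.sum_congr rfl (fun j _ => key j), Finset.sum_add_distrib, Finset.sum_add_distrib,
    ← Finset.mul_sum, Finset.sum_ite_eq]
  have hn : ∑ j, x j ^ 2 = ‖x‖ ^ 2 := (EuclideanSpace.real_norm_sq_eq x).symm
  rw [hn]
  have ho := hODE _ hr
  have e : g2 ‖x‖ = -(((n : ℝ) - 1) / ‖x‖ * g1 ‖x‖ + (μ - ((n : ℝ) - 1) / ‖x‖ ^ 2) * g ‖x‖) := by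
    linarith
  rw [e]
  simp
  field_simp
  ring

lemma lapWithin_congr {n : ℕ} {S : Set (EuclideanSpace ℝ (Fin n))}
    {f f' : EuclideanSpace ℝ (Fin n) → ℝ} (h : ∀ x ∈ S, f x = f' x)
    {x : EuclideanSpace ℝ (Fin n)} (hx : x ∈ S) : lapWithin S f x = lapWithin S f' x := by
  unfold lapWithin
  refine Finset.sum_congr rfl fun j _ => ?_
  have hc : ∀ y ∈ S, fderivWithin ℝ f S y (EuclideanSpace.single j 1)
      = fderivWithin ℝ f' S y (EuclideanSpace.single j 1) := fun y hy => by
    rw [fderivWithin_congr h (h y hy)]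
  rw [fderivWithin_congr hc (hc x hx)]

lemma lap_iter {n : ℕ} {R μ : ℝ} (hR : 0 < R) (i : Fin n) {g g1 g2 : ℝ → ℝ}
    (hg : ∀ r ∈ Ioc 0 R, HasDerivWithinAt g (g1 r) (Ioc 0 R) r)
    (hg1 : ∀ r ∈ Ioc 0 R, HasDerivWithinAt g1 (g2 r) (Ioc 0 R) r)
    (hODE : ∀ r ∈ Ioc (0 : ℝ) R,
      g2 r + ((n : ℝ) - 1) / r * g1 r + (μ - ((n : ℝ) - 1) / r ^ 2) * g r = 0) (k : ℕ) :
    ∀ x ∈ closedBall (0 : EuclideanSpace ℝ (Fin n)) R \ {0},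
    (lapWithin (closedBall 0 R \ {0}))^[k] (fun y => g ‖y‖ * (y i / ‖y‖)) x =
        ((-μ) ^ k * g ‖x‖) * (x i / ‖x‖) := by
  induction k with
  | zero => intro x _; simp
  | succ k ih =>
    intro x hx
    rw [Function.iterate_succ_apply', lapWithin_congr ih hx]
    have h := lap_u (μ := μ) hR i (g := fun r => (-μ) ^ k * g r) (g1 := fun r => (-μ) ^ k * g1 r)
      (g2 := fun r => (-μ) ^ k * g2 r) (fun r hr => (hg r hr).const_mul _)
      (fun r hr => (hg1 r hr).const_mul _)
      (fun r hr => by linear_combination (-μ) ^ k * hODE r hr) hx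
    rw [h]
    ring

/-- **Radial solutions of the Bessel-type ODE give eigenfunctions of all iterated Laplacians.**
Let `n ≥ 2`, `R > 0`, `μ > 0`, `k ≥ 1`, `i ∈ {1,…,n}`, and let `g` be smooth on `(0,R]` with
`g'' + (n−1)/r·g' + (μ − (n−1)/r²)·g = 0` on `(0,R]`. Then `u(x) = g(|x|)·xᵢ/|x|` satisfies
`Δu = −μ·u` and `Δᵏu = (−μ)ᵏ·u` on `B_R(0) \ {0}`; if moreover `g'(R) = 0`, then the outward
radial derivative of `Δᵏu` (computed within `closedBall 0 R \ {0}`) vanishes on the sphere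
`|x| = R` for every `k ≥ 0`. -/
theorem radial_ode_eigenfunction_iterated_laplacian {n : ℕ} (hn : 2 ≤ n)
    (R μ : ℝ) (hR : 0 < R) (hμ : 0 < μ) (k : ℕ) (hk : 1 ≤ k) (i : Fin n)
    (g : ℝ → ℝ) (hg : ContDiffOn ℝ (⊤ : ℕ∞) g (Ioc 0 R))
    (hODE : ∀ r ∈ Ioc (0 : ℝ) R,
      derivWithin (derivWithin g (Ioc 0 R)) (Ioc 0 R) r
        + ((n : ℝ) - 1) / r * derivWithin g (Ioc 0 R) r
        + (μ - ((n : ℝ) - 1) / r ^ 2) * g r = 0) :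
    (∀ x ∈ ball (0 : EuclideanSpace ℝ (Fin n)) R \ {0},
      lapWithin (closedBall 0 R \ {0}) (fun y => g ‖y‖ * (y i / ‖y‖)) x =
        -μ * (g ‖x‖ * (x i / ‖x‖))) ∧
    (∀ x ∈ ball (0 : EuclideanSpace ℝ (Fin n)) R \ {0},
      (lapWithin (closedBall 0 R \ {0}))^[k] (fun y => g ‖y‖ * (y i / ‖y‖)) x =
        (-μ) ^ k * (g ‖x‖ * (x i / ‖x‖))) ∧
    (derivWithin g (Ioc 0 R) R = 0 →
      ∀ k' : ℕ, ∀ x : EuclideanSpace ℝ (Fin n), ‖x‖ = R →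
        fderivWithin ℝ ((lapWithin (closedBall 0 R \ {0}))^[k'] (fun y => g ‖y‖ * (y i / ‖y‖)))
          (closedBall 0 R \ {0}) x (‖x‖⁻¹ • x) = 0) := by
  have hUI : UniqueDiffOn ℝ (Ioc 0 R) := uniqueDiffOn_Ioc 0 R
  have h0 : ∀ r ∈ Ioc 0 R, HasDerivWithinAt g (derivWithin g (Ioc 0 R) r) (Ioc 0 R) r :=
    fun r hr => ((hg.differentiableOn (by simp)) r hr).hasDerivWithinAt
  have h1 : ∀ r ∈ Ioc 0 R, HasDerivWithinAt (derivWithin g (Ioc 0 R))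
      (derivWithin (derivWithin g (Ioc 0 R)) (Ioc 0 R) r) (Ioc 0 R) r := by
    have hd : ContDiffOn ℝ 1 (derivWithin g (Ioc 0 R)) (Ioc 0 R) :=
      hg.derivWithin hUI (by norm_cast)
    exact fun r hr => ((hd.differentiableOn (by simp)) r hr).hasDerivWithinAt
  have hsub : ∀ x ∈ ball (0 : EuclideanSpace ℝ (Fin n)) R \ {0},
      x ∈ closedBall (0 : EuclideanSpace ℝ (Fin n)) R \ {0} :=
    fun x hx => ⟨ball_subset_closedBall hx.1, hx.2⟩
  refine ⟨fun x hx => lap_u hR i h0 h1 hODE (hsub x hx), fun x hx => ?_, fun hgR k' x hxR => ?_⟩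
  · rw [lap_iter hR i h0 h1 hODE k x (hsub x hx)]
    ring
  · have hxne : ‖x‖ ≠ 0 := by rw [hxR]; exact hR.ne'
    have hx : x ∈ closedBall (0 : EuclideanSpace ℝ (Fin n)) R \ {0} :=
      ⟨by simp [hxR], by simpa using hxne⟩
    have hc := lap_iter hR i h0 h1 hODE k'
    rw [fderivWithin_congr hc (hc x hx)]
    have hd := hasFDerivWithinAt_u i (g := fun r => (-μ) ^ k' * g r) hx
      ((h0 _ (norm_mem_Ioc hx)).const_mul _)
    rw [hd.fderivWithin (uniqueDiffOn_punctured hR x hx)]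
    rw [hxR] at hxne
    simp [hxR, hgR, real_inner_smul_right, real_inner_self_eq_norm_sq]
    field_simp
    simp
end
end

section
/- Let n ≥ 2, μ > 0, m ≥ 1, and suppose g : (0, ∞) → ℝ is smooth and satisfies g''(r) + (n−1)/r · g'(r) + ( μ − (n−1)/r² ) g(r) = 0 on (0, ∞). Define uᵢ(x) = g(|x|)·xᵢ/|x| for i = 1, …, n and x ≠ 0. Then for every x ≠ 0, with r = |x|: (a) Σ_{i=1}^{n} uᵢ(x)² = g(r)², and (b) Σ_{i=1}^{n} |Δᵐuᵢ(x)|² = ( Lᵐg(r) )² = μ^{2m}·g(r)², where L is the operator (Lh)(r) = h''(r) + (n−1)/r · h'(r) − (n−1)/r² · h(r) and Lᵐ its m-fold iterate. -/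
open Set

noncomputable section

/-- The Laplacian on `ℝⁿ`: the sum of the second partial derivatives. -/
def lap {n : ℕ} (f : EuclideanSpace ℝ (Fin n) → ℝ) (x : EuclideanSpace ℝ (Fin n)) : ℝ :=
  ∑ i : Fin n, fderiv ℝ
    (fun y => fderiv ℝ f y (EuclideanSpace.single i 1)) x (EuclideanSpace.single i 1)

section helpers

lemma hasFDerivAt_radial {n : ℕ} {φ : ℝ → ℝ} {d : ℝ} {y : EuclideanSpace ℝ (Fin n)}
    (hy : y ≠ 0) (h : HasDerivAt φ d ‖y‖) :
    HasFDerivAt (fun z : EuclideanSpace ℝ (Fin n) => φ ‖z‖) ((d / ‖y‖) • innerSL ℝ y) y := by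
  have hy' : ‖y‖ ≠ 0 := norm_ne_zero_iff.mpr hy
  have h1 := (hasStrictFDerivAt_norm_sq y).hasFDerivAt.sqrt (pow_ne_zero 2 hy')
  have h2 : HasFDerivAt (fun z : EuclideanSpace ℝ (Fin n) => ‖z‖) ((1 / ‖y‖) • innerSL ℝ y) y := by
    have e1 : (fun z : EuclideanSpace ℝ (Fin n) => √(‖z‖ ^ 2)) = fun z => ‖z‖ := by
      ext z; simp
    have e2 : (1 / (2 * √(‖y‖ ^ 2))) • 2 • (innerSL ℝ) y = (1 / ‖y‖) • innerSL ℝ y := by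
      rw [Real.sqrt_sq (norm_nonneg y)]
      ext z; simp; field_simp
    rw [e1, e2] at h1
    exact h1
  have e3 : d • (1 / ‖y‖) • innerSL ℝ y = (d / ‖y‖) • innerSL ℝ y := by
    rw [smul_smul, mul_one_div]
  have h4 := h.comp_hasFDerivAt y h2
  rw [e3] at h4
  exact h4

lemma hasFDerivAt_coord {n : ℕ} (i : Fin n) (y : EuclideanSpace ℝ (Fin n)) :
    HasFDerivAt (fun z : EuclideanSpace ℝ (Fin n) => z i)
      (EuclideanSpace.proj i : EuclideanSpace ℝ (Fin n) →L[ℝ] ℝ) y :=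
  (EuclideanSpace.proj i : EuclideanSpace ℝ (Fin n) →L[ℝ] ℝ).hasFDerivAt

lemma fderiv_trial {n : ℕ} {g : ℝ → ℝ} {d : ℝ} {y : EuclideanSpace ℝ (Fin n)}
    (hy : y ≠ 0) (h : HasDerivAt g d ‖y‖) (i j : Fin n) :
    fderiv ℝ (fun z : EuclideanSpace ℝ (Fin n) => g ‖z‖ * (z i / ‖z‖)) y
      (EuclideanSpace.single j 1) =
      (d / ‖y‖ ^ 2 - g ‖y‖ / ‖y‖ ^ 3) * (y j * y i)
        + g ‖y‖ / ‖y‖ * (if i = j then 1 else 0) := by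
  have hy' : ‖y‖ ≠ 0 := norm_ne_zero_iff.mpr hy
  have h1 := (hasFDerivAt_radial hy (h.fun_div (hasDerivAt_id' ‖y‖) hy')).fun_mul (hasFDerivAt_coord i y)
  have h2 : (fun z : EuclideanSpace ℝ (Fin n) => g ‖z‖ * (z i / ‖z‖)) =
      (fun z : EuclideanSpace ℝ (Fin n) => (fun r => g r / r) ‖z‖ * z i) := by
    ext z; simp; ring
  rw [h2]
  erw [h1.fderiv]
  simp [EuclideanSpace.inner_single_right, Pi.single_apply]
  split_ifs <;> field_simp <;> ring

lemma lap_trial {n : ℕ} {g : ℝ → ℝ} {x : EuclideanSpace ℝ (Fin n)}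
    (hx : x ≠ 0) (h : ∀ r : ℝ, 0 < r → DifferentiableAt ℝ g r)
    (h' : ∀ r : ℝ, 0 < r → DifferentiableAt ℝ (deriv g) r) (i : Fin n) :
    lap (fun z : EuclideanSpace ℝ (Fin n) => g ‖z‖ * (z i / ‖z‖)) x =
      (deriv (deriv g) ‖x‖ + ((n : ℝ) - 1) / ‖x‖ * deriv g ‖x‖
        - ((n : ℝ) - 1) / ‖x‖ ^ 2 * g ‖x‖) * (x i / ‖x‖) := by
  have hx' : ‖x‖ ≠ 0 := norm_ne_zero_iff.mpr hx
  have hp : 0 < ‖x‖ := norm_pos_iff.mpr hx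
  have key : ∀ j : Fin n, fderiv ℝ (fun y => fderiv ℝ
      (fun z : EuclideanSpace ℝ (Fin n) => g ‖z‖ * (z i / ‖z‖)) y (EuclideanSpace.single j 1)) x
        (EuclideanSpace.single j 1) =
      (deriv (deriv g) ‖x‖ / ‖x‖ ^ 3 - 3 * deriv g ‖x‖ / ‖x‖ ^ 4 + 3 * g ‖x‖ / ‖x‖ ^ 5)
          * x i * x j ^ 2
        + (deriv g ‖x‖ / ‖x‖ ^ 2 - g ‖x‖ / ‖x‖ ^ 3) * (x i + 2 * if i = j then x i else 0) := by
    intro j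
    have hev : (fun y => fderiv ℝ
        (fun z : EuclideanSpace ℝ (Fin n) => g ‖z‖ * (z i / ‖z‖)) y (EuclideanSpace.single j 1))
        =ᶠ[nhds x] (fun y => (fun r => deriv g r / r ^ 2 - g r / r ^ 3) ‖y‖ * (y j * y i)
          + (fun r => g r / r) ‖y‖ * (if i = j then 1 else 0)) := by
      filter_upwards [isOpen_ne.mem_nhds hx] with y hy
      exact fderiv_trial hy (h _ (norm_pos_iff.mpr hy)).hasDerivAt i j
    rw [hev.fderiv_eq]
    have d0 := (h _ hp).hasDerivAt
    have d1 := (h' _ hp).hasDerivAt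
    have e1 := (d1.fun_div (hasDerivAt_pow 2 ‖x‖) (pow_ne_zero 2 hx')).fun_sub
      (d0.fun_div (hasDerivAt_pow 3 ‖x‖) (pow_ne_zero 3 hx'))
    have e2 := d0.fun_div (hasDerivAt_id' ‖x‖) hx'
    have e3 := ((hasFDerivAt_radial hx e1).fun_mul
      ((hasFDerivAt_coord j x).fun_mul (hasFDerivAt_coord i x))).fun_add
      ((hasFDerivAt_radial hx e2).mul_const (if i = j then (1 : ℝ) else 0))
    erw [e3.fderiv]
    by_cases hij : i = j
    · subst hij
      simp [EuclideanSpace.inner_single_right]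
      field_simp
      ring
    · simp [EuclideanSpace.inner_single_right, hij]
      field_simp
      ring
  unfold lap
  rw [Finset.sum_congr rfl (fun j _ => key j), Finset.sum_add_distrib, ← Finset.mul_sum,
    ← Finset.mul_sum, Finset.sum_add_distrib, ← Finset.mul_sum, ← EuclideanSpace.real_norm_sq_eq]
  simp
  field_simp
  ring

lemma lap_congr_smul {n : ℕ} {f v : EuclideanSpace ℝ (Fin n) → ℝ} {c : ℝ}
    (hf : ∀ y, y ≠ 0 → f y = c * v y) (x : EuclideanSpace ℝ (Fin n)) (hx : x ≠ 0) :
    lap f x = c * lap v x := by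
  have h1 : ∀ y : EuclideanSpace ℝ (Fin n), y ≠ 0 → fderiv ℝ f y = c • fderiv ℝ v y := by
    intro y hy
    have : f =ᶠ[nhds y] c • v := by
      filter_upwards [isOpen_ne.mem_nhds hy] with z hz
      simp [hf z hz]
    rw [this.fderiv_eq, fderiv_const_smul_field]
    rfl
  unfold lap
  rw [Finset.mul_sum]
  refine Finset.sum_congr rfl fun j _ => ?_
  have : (fun y => fderiv ℝ f y (EuclideanSpace.single j 1)) =ᶠ[nhds x]
      c • (fun y => fderiv ℝ v y (EuclideanSpace.single j 1)) := by
    filter_upwards [isOpen_ne.mem_nhds hx] with z hz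
    simp [h1 z hz]
  rw [this.fderiv_eq, fderiv_const_smul_field]
  rfl

lemma deriv_congr_smul {f v : ℝ → ℝ} {c : ℝ}
    (hf : ∀ y, 0 < y → f y = c * v y) (x : ℝ) (hx : 0 < x) :
    deriv f x = c * deriv v x := by
  have : f =ᶠ[nhds x] fun y => c * v y := by
    filter_upwards [isOpen_Ioi.mem_nhds hx] with z hz
    exact hf z hz
  rw [this.deriv_eq, deriv_const_mul_field]

end helpers

/-- **Pointwise identities for the trial functions `uᵢ(x) = g(|x|)·xᵢ/|x|`.**
Let `n ≥ 2`, `μ > 0`, `m ≥ 1`, and let `g` be smooth on `(0,∞)` satisfying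
`g'' + (n−1)/r·g' + (μ − (n−1)/r²)·g = 0` there. With `L` the operator
`(Lh)(r) = h'' + (n−1)/r·h' − (n−1)/r²·h`, for every `x ≠ 0` (writing `r = |x|`):
(a) `Σᵢ uᵢ(x)² = g(r)²`, and (b) `Σᵢ |Δᵐuᵢ(x)|² = (Lᵐg(r))² = μ^(2m)·g(r)²`. -/
theorem trial_function_identities {n : ℕ} (hn : 2 ≤ n) (μ : ℝ) (hμ : 0 < μ)
    (m : ℕ) (hm : 1 ≤ m)
    (g : ℝ → ℝ) (hg : ContDiffOn ℝ (⊤ : ℕ∞) g (Ioi 0))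
    (hODE : ∀ r ∈ Ioi (0 : ℝ),
      deriv (deriv g) r + ((n : ℝ) - 1) / r * deriv g r
        + (μ - ((n : ℝ) - 1) / r ^ 2) * g r = 0)
    (u : Fin n → EuclideanSpace ℝ (Fin n) → ℝ)
    (hu : ∀ i x, u i x = g ‖x‖ * (x i / ‖x‖))
    (L : (ℝ → ℝ) → (ℝ → ℝ))
    (hL : ∀ h r, L h r = deriv (deriv h) r + ((n : ℝ) - 1) / r * deriv h r
        - ((n : ℝ) - 1) / r ^ 2 * h r) :
    ∀ x : EuclideanSpace ℝ (Fin n), x ≠ 0 →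
      (∑ i : Fin n, (u i x) ^ 2 = (g ‖x‖) ^ 2) ∧
      (∑ i : Fin n, ((lap (n := n))^[m] (u i) x) ^ 2 = (L^[m] g ‖x‖) ^ 2) ∧
      (∑ i : Fin n, ((lap (n := n))^[m] (u i) x) ^ 2 = μ ^ (2 * m) * (g ‖x‖) ^ 2) := by
  have hd : ∀ r : ℝ, 0 < r → DifferentiableAt ℝ g r := fun r hr =>
    ((hg.contDiffAt (isOpen_Ioi.mem_nhds hr)).differentiableAt (by simp))
  have hd' : ∀ r : ℝ, 0 < r → DifferentiableAt ℝ (deriv g) r := fun r hr =>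
    ((hg.deriv_of_isOpen (m := 1) isOpen_Ioi (by
      rw [one_add_one_eq_two]
      exact WithTop.coe_le_coe.mpr (le_top : (2 : ℕ∞) ≤ ⊤))).contDiffAt
      (isOpen_Ioi.mem_nhds hr)).differentiableAt (by simp)
  have hu' : ∀ i, u i = fun z => g ‖z‖ * (z i / ‖z‖) := fun i => funext (hu i)
  have hlap : ∀ i x, x ≠ 0 → lap (u i) x = -μ * u i x := by
    intro i x hx
    have h1 := hODE ‖x‖ (norm_pos_iff.mpr hx)
    rw [hu i x, hu' i, lap_trial hx hd hd' i]
    linear_combination (x i / ‖x‖) * h1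
  have hlapm : ∀ i (k : ℕ) x, x ≠ 0 → (lap (n := n))^[k] (u i) x = (-μ) ^ k * u i x := by
    intro i k
    induction k with
    | zero => intro x _; simp
    | succ k ih =>
      intro x hx
      rw [Function.iterate_succ_apply', lap_congr_smul ih x hx, hlap i x hx]
      ring
  have hLm : ∀ (k : ℕ) r, 0 < r → L^[k] g r = (-μ) ^ k * g r := by
    intro k
    induction k with
    | zero => intro r _; simp
    | succ k ih =>
      intro r hr
      have h1 := deriv_congr_smul ih
      rw [Function.iterate_succ_apply', hL, deriv_congr_smul h1 r hr, h1 r hr, ih r hr]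
      linear_combination (-μ) ^ k * hODE r hr
  intro x hx
  have hp : 0 < ‖x‖ := norm_pos_iff.mpr hx
  have ha : ∑ i : Fin n, (u i x) ^ 2 = (g ‖x‖) ^ 2 := by
    simp only [hu, mul_pow, div_pow]
    rw [← Finset.mul_sum, ← Finset.sum_div, ← EuclideanSpace.real_norm_sq_eq,
      div_self (pow_ne_zero 2 hp.ne'), mul_one]
  have hb : ∑ i : Fin n, ((lap (n := n))^[m] (u i) x) ^ 2 = μ ^ (2 * m) * (g ‖x‖) ^ 2 := by
    rw [← ha, Finset.mul_sum]
    refine Finset.sum_congr rfl fun i _ => ?_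
    rw [hlapm i m x hx, mul_pow, ← pow_mul, mul_comm m 2, (even_two_mul m).neg_pow]
  refine ⟨ha, ?_, hb⟩
  rw [hb, hLm m _ hp, mul_pow, ← pow_mul, mul_comm m 2, (even_two_mul m).neg_pow]
end
end

section
/- Let n ≥ 2 and let Ω be a bounded open set in ℝⁿ with positive Lebesgue measure. Let G : [0, ∞) → ℝ be continuous and bounded with G(r) > 0 for all r > 0. Then there exists a point x⁰ in the closed convex hull of Ω such that the ℝⁿ-valued integral ∫_Ω G(|x − x⁰|)·(x − x⁰)/|x − x⁰| dx equals the zero vector (the integrand being extended by 0 at x = x⁰). -/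
open MeasureTheory Set

/-- **Existence of a center (Weinberger's topological argument).**
Let `n ≥ 2` and let `Ω ⊂ ℝⁿ` be a bounded open set of positive Lebesgue measure. Let
`G : [0,∞) → ℝ` be continuous and bounded with `G(r) > 0` for `r > 0`. Then there is a point
`x⁰` in the closed convex hull of `Ω` such that
`∫_Ω G(|x − x⁰|)·(x − x⁰)/|x − x⁰| dx = 0` (the integrand being `0` at `x = x⁰`). -/
theorem exists_center_vector_field_vanishes {n : ℕ} (hn : 2 ≤ n)
    (Ω : Set (EuclideanSpace ℝ (Fin n))) (hΩo : IsOpen Ω) (hΩb : Bornology.IsBounded Ω)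
    (hΩpos : 0 < volume Ω)
    (G : ℝ → ℝ) (hGc : ContinuousOn G (Ici 0))
    (hGbdd : ∃ C : ℝ, ∀ r ∈ Ici (0 : ℝ), |G r| ≤ C)
    (hGpos : ∀ r : ℝ, 0 < r → 0 < G r) :
    ∃ x₀ ∈ closure (convexHull ℝ Ω),
      (∫ x in Ω, (G ‖x - x₀‖ / ‖x - x₀‖) • (x - x₀)) = (0 : EuclideanSpace ℝ (Fin n)) := by
  obtain ⟨C, hC⟩ := hGbdd
  haveI : Nonempty (Fin n) := ⟨⟨0, by omega⟩⟩
  haveI : Nontrivial (EuclideanSpace ℝ (Fin n)) := inferInstance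
  have hC0 : 0 ≤ C := (abs_nonneg _).trans (hC 0 (by simp))
  have hgc : Continuous (fun t : ℝ => G |t|) :=
    hGc.comp_continuous continuous_abs (fun t => abs_nonneg t)
  set H : ℝ → ℝ := fun r => ∫ t in (0:ℝ)..r, G |t| with hH
  have hHd : ∀ r, HasDerivAt H (G |r|) r := fun r =>
    intervalIntegral.integral_hasDerivAt_right (hgc.intervalIntegrable _ _)
      hgc.aestronglyMeasurable.stronglyMeasurableAtFilter hgc.continuousAt
  have hHc : Continuous H := continuous_iff_continuousAt.2 fun r => (hHd r).continuousAt
  have hHlip : ∀ a b, |H a - H b| ≤ C * |a - b| := by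
    intro a b
    have := Convex.norm_image_sub_le_of_norm_hasDerivWithin_le (f := H) (s := univ)
      (f' := fun r => G |r|) (C := C) (fun r _ => (hHd r).hasDerivWithinAt)
      (fun r _ => hC _ (abs_nonneg r)) convex_univ (mem_univ b) (mem_univ a)
    simpa using this
  have hHmono : MonotoneOn H (Ici 0) := by
    apply monotoneOn_of_deriv_nonneg (convex_Ici 0) hHc.continuousOn
      (fun r _ => (hHd r).differentiableAt.differentiableWithinAt)
    intro r hr
    rw [interior_Ici] at hr
    rw [(hHd r).deriv]
    exact (hGpos _ (abs_pos.2 (ne_of_gt hr))).le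
  have hfin : volume Ω < ⊤ := hΩb.measure_lt_top
  haveI : IsFiniteMeasure (volume.restrict Ω) := ⟨by simpa using hfin⟩
  have hcpt : IsCompact (closure Ω) := hΩb.isCompact_closure
  have hint : ∀ y : EuclideanSpace ℝ (Fin n), IntegrableOn (fun x => H ‖x - y‖) Ω := by
    intro y
    have : Continuous (fun x : EuclideanSpace ℝ (Fin n) => H ‖x - y‖) := by fun_prop
    exact (this.continuousOn.integrableOn_compact hcpt).mono_set subset_closure
  set f : EuclideanSpace ℝ (Fin n) → EuclideanSpace ℝ (Fin n) → EuclideanSpace ℝ (Fin n) :=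
    fun y x => (G ‖x - y‖ / ‖x - y‖) • (x - y) with hf
  have hfm : ∀ y, Measurable (f y) := by
    intro y
    have h1 : Measurable (fun x : EuclideanSpace ℝ (Fin n) => G ‖x - y‖) := by
      have : Continuous (fun x : EuclideanSpace ℝ (Fin n) => G |‖x - y‖|) :=
        hgc.comp (by fun_prop : Continuous fun x : EuclideanSpace ℝ (Fin n) => ‖x - y‖)
      simpa using this.measurable
    have h2 : Measurable (fun x : EuclideanSpace ℝ (Fin n) => ‖x - y‖) := by fun_prop
    have h3 : Measurable (fun x : EuclideanSpace ℝ (Fin n) => x - y) := by fun_prop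
    exact (h1.div h2).smul h3
  have hfb : ∀ y x, ‖f y x‖ ≤ C := by
    intro y x
    simp only [hf, norm_smul, norm_div, norm_norm]
    by_cases h : ‖x - y‖ = 0
    · simp [h, hC0]
    · rw [div_mul_cancel₀ _ h]
      exact hC _ (norm_nonneg _)
  have hfi : ∀ y, IntegrableOn (f y) Ω := fun y =>
    Integrable.of_bound (hfm y).aestronglyMeasurable C (Filter.Eventually.of_forall (hfb y))
  set Φ : EuclideanSpace ℝ (Fin n) → ℝ := fun y => ∫ x in Ω, H ‖x - y‖ with hΦ
  have hpt : ∀ x y : EuclideanSpace ℝ (Fin n), x ≠ y →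
      HasFDerivAt (fun z => H ‖x - z‖) (-(innerSL ℝ (f y x))) y := by
    intro x y hxy
    have hne : x - y ≠ 0 := sub_ne_zero.2 hxy
    have hsq : HasFDerivAt (fun z => ‖x - z‖ ^ 2)
        (2 • (innerSL ℝ (x - y)).comp (-(ContinuousLinearMap.id ℝ (EuclideanSpace ℝ (Fin n))))) y :=
      ((hasFDerivAt_id y).const_sub x).norm_sq
    have hs := hsq.sqrt (pow_ne_zero 2 (norm_ne_zero_iff.2 hne))
    simp only [Real.sqrt_sq (norm_nonneg _)] at hs
    have := (hHd ‖x - y‖).comp_hasFDerivAt y hs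
    rw [abs_norm] at this
    refine this.congr_fderiv ?_
    ext v
    simp [hf, inner_smul_left]
    field_simp
    ring
  have hlip2 : ∀ x y z : EuclideanSpace ℝ (Fin n), |H ‖x - y‖ - H ‖x - z‖| ≤ C * ‖y - z‖ := by
    intro x y z
    refine (hHlip _ _).trans (mul_le_mul_of_nonneg_left ?_ hC0)
    refine (abs_norm_sub_norm_le _ _).trans (le_of_eq ?_)
    rw [← norm_neg]; congr 1; abel
  have hΦd : ∀ y, HasFDerivAt Φ (∫ x in Ω, -(innerSL ℝ (f y x))) y := by
    intro y
    refine (hasFDerivAt_integral_of_dominated_loc_of_lip (bound := fun _ => C)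
      (F := fun z x => H ‖x - z‖) (F' := fun x => -(innerSL ℝ (f y x)))
      (Filter.univ_mem) ?_ (hint y) ?_ ?_ (integrable_const C) ?_).2
    · exact Filter.Eventually.of_forall fun z => (hint z).aestronglyMeasurable
    · exact (((innerSL ℝ).continuous.measurable.comp (hfm y)).neg).aestronglyMeasurable
    · refine Filter.Eventually.of_forall fun x => ?_
      refine LipschitzWith.lipschitzOnWith (LipschitzWith.of_dist_le_mul fun a b => ?_)
      rw [Real.dist_eq, dist_eq_norm, Real.coe_nnabs, abs_of_nonneg hC0]
      exact hlip2 x a b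
    · have : ∀ᵐ x ∂(volume.restrict Ω), x ≠ y :=
        ae_restrict_of_ae (Measure.ae_ne volume y)
      filter_upwards [this] with x hx using hpt x y hx
  set K := closure (convexHull ℝ Ω) with hK
  have hKc : IsCompact K := ((isBounded_convexHull).2 hΩb).isCompact_closure
  have hKconv : Convex ℝ K := (convex_convexHull ℝ Ω).closure
  have hΩK : Ω ⊆ K := (subset_convexHull ℝ Ω).trans subset_closure
  have hKne : K.Nonempty := (nonempty_of_measure_ne_zero hΩpos.ne').mono hΩK
  have hΦc : Continuous Φ := continuous_iff_continuousAt.2 fun y => (hΦd y).continuousAt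
  obtain ⟨x₀, hx₀, hmin⟩ := hKc.exists_isMinOn hKne hΦc.continuousOn
  refine ⟨x₀, hx₀, ?_⟩
  have hglob : ∀ u, Φ x₀ ≤ Φ u := by
    intro u
    obtain ⟨v, hv, hvu⟩ := exists_norm_eq_iInf_of_complete_convex hKne hKc.isComplete hKconv u
    rw [norm_eq_iInf_iff_real_inner_le_zero hKconv hv] at hvu
    refine (hmin hv).trans ?_
    refine setIntegral_mono_on (hint v) (hint u) hΩo.measurableSet fun w hw => ?_
    refine hHmono (norm_nonneg _) (norm_nonneg _) ?_
    have h1 := hvu w (hΩK hw)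
    have h2 : ‖w - u‖ ^ 2 = ‖w - v‖ ^ 2 - 2 * inner ℝ (u - v) (w - v) + ‖u - v‖ ^ 2 := by
      rw [real_inner_comm, ← norm_sub_sq_real]; congr 2; abel
    refine le_of_sq_le_sq ?_ (norm_nonneg _)
    nlinarith [sq_nonneg ‖u - v‖]
  have hz : (∫ x in Ω, -(innerSL ℝ (f x₀ x))) = 0 :=
    IsLocalMin.hasFDerivAt_eq_zero (Filter.Eventually.of_forall hglob) (hΦd x₀)
  rw [integral_neg, neg_eq_zero] at hz
  have h3 := ContinuousLinearMap.integral_comp_comm (innerSL ℝ) (hfi x₀)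
  rw [hz] at h3
  have h4 := congrArg (fun L => L (∫ x in Ω, f x₀ x)) h3
  exact (inner_self_eq_zero (𝕜 := ℝ)).1 h4.symm
end
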